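/- Let γ ∈ ℝ \ {0} and γ̃ = √(3/π)·γ. There exist λ > 0, M > 0 and ε₀ > 0 such that for every 0 < ε ≤ ε₀ there exists a real-analytic function Φ_ε on S² such that Ψ̄_ε(t,θ,φ) := Φ_ε(θ, φ − γ̃t) is a travelling wave solution of the Euler equations on the non-rotating sphere (i.e. ∂_tΩ̄_ε + ∇⊥Ψ̄_ε·∇Ω̄_ε = 0 with Ω̄_ε = ΔΨ̄_ε), with ‖3γY₁⁰ − Φ_ε‖_{G_λ} ≤ Mε, and Φ_ε is non-zonal and non-trivial (in particular ⟨Φ_ε, Y₄²⟩ ≠ 0). -/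

import Mathlib

open MeasureTheory
open scoped ENNReal

noncomputable section

/-- Functions on the unit sphere, represented in colatitude-longitude coordinates `(θ, φ)`. -/
abbrev SphereFun : Type := ℝ → ℝ → ℝ

/-- The `L²` inner product on the sphere:
`⟨u,v⟩ = ∫₀^{2π} ∫₀^π u v sin θ dθ dφ`. -/
def sInner (u v : SphereFun) : ℝ :=
  ∫ φ in (0:ℝ)..(2*Real.pi), ∫ θ in (0:ℝ)..Real.pi, u θ φ * v θ φ * Real.sin θ

/-- Legendre polynomials via Rodrigues' formula. -/
def legP (n : ℕ) (s : ℝ) : ℝ :=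
  (1 / ((2:ℝ)^n * (Nat.factorial n : ℝ))) * iteratedDeriv n (fun x : ℝ => (x^2 - 1)^n) s

/-- Associated Legendre functions `P_n^m`. -/
def assocLegP (n m : ℕ) (s : ℝ) : ℝ :=
  (-1 : ℝ)^m * (1 - s^2) ^ ((m : ℝ)/2) * iteratedDeriv m (legP n) s

/-- Real spherical harmonics `Y_n^m`. -/
def Ynm (n : ℕ) (m : ℤ) : SphereFun := fun θ φ =>
  if m = 0 then
    Real.sqrt ((2*(n:ℝ)+1)/(4*Real.pi)) * legP n (Real.cos θ)
  else if 0 < m then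
    (-1 : ℝ)^(m.natAbs) * Real.sqrt 2 *
      Real.sqrt ((2*(n:ℝ)+1)/(4*Real.pi) *
        ((Nat.factorial (n - m.natAbs) : ℝ) / (Nat.factorial (n + m.natAbs) : ℝ))) *
      assocLegP n m.natAbs (Real.cos θ) * Real.cos ((m.natAbs : ℝ) * φ)
  else
    (-1 : ℝ)^(m.natAbs) * Real.sqrt 2 *
      Real.sqrt ((2*(n:ℝ)+1)/(4*Real.pi) *
        ((Nat.factorial (n - m.natAbs) : ℝ) / (Nat.factorial (n + m.natAbs) : ℝ))) *
      assocLegP n m.natAbs (Real.cos θ) * Real.sin ((m.natAbs : ℝ) * φ)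

/-- The spherical-harmonic coefficient `u_n^m = ⟨u, Y_n^m⟩`. -/
def coeff (u : SphereFun) (n : ℕ) (m : ℤ) : ℝ := sInner u (Ynm n m)

/-- `μ_n = n(n+1) + 1`. -/
def muSp (n : ℕ) : ℝ := (n:ℝ)*((n:ℝ)+1)+1

/-- Squared (inhomogeneous) Sobolev norm `‖u‖²_{H^k} = Σ μ_n^k |u_n^m|²`. -/
def sobNormSq (k : ℕ) (u : SphereFun) : ℝ≥0∞ :=
  ∑' p : ℕ × ℤ, if |p.2| ≤ (p.1 : ℤ) then
    ENNReal.ofReal ((muSp p.1)^k * (coeff u p.1 p.2)^2) else 0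

/-- Squared homogeneous Sobolev norm `‖u‖²_{Ḣ^k} = Σ_{n ≥ 1} λ_n^k |u_n^m|²`. -/
def dotNormSq (k : ℕ) (u : SphereFun) : ℝ≥0∞ :=
  ∑' p : ℕ × ℤ, if 1 ≤ p.1 ∧ |p.2| ≤ (p.1 : ℤ) then
    ENNReal.ofReal (((p.1:ℝ)*((p.1:ℝ)+1))^k * (coeff u p.1 p.2)^2) else 0

/-- Squared Gevrey norm `‖u‖²_{G_λ} = Σ_{n ≥ 1} μ_n² e^{2λ√μ_n} |u_n^m|²`. -/
def gevNormSq (lam : ℝ) (u : SphereFun) : ℝ≥0∞ :=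
  ∑' p : ℕ × ℤ, if 1 ≤ p.1 ∧ |p.2| ≤ (p.1 : ℤ) then
    ENNReal.ofReal ((muSp p.1)^2 * Real.exp (2*lam*Real.sqrt (muSp p.1)) *
      (coeff u p.1 p.2)^2) else 0

/-- `∂_θ`. -/
def dTheta (u : SphereFun) : SphereFun := fun θ φ => deriv (fun t => u t φ) θ

/-- `∂_φ`. -/
def dPhi (u : SphereFun) : SphereFun := fun θ φ => deriv (fun p => u θ p) φ

/-- The Laplace–Beltrami operator in colatitude-longitude coordinates:
`Δu = (1/sinθ)∂_θ(sinθ ∂_θu) + (1/sin²θ)∂²_φu`. -/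
def lapS (u : SphereFun) : SphereFun := fun θ φ =>
  (1 / Real.sin θ) * deriv (fun t => Real.sin t * dTheta u t φ) θ
  + (1 / (Real.sin θ)^2) * dPhi (dPhi u) θ φ

/-- A zonal function: one depending only on the colatitude `θ`. -/
def Zonal (u : SphereFun) : Prop := ∀ (θ φ₁ φ₂ : ℝ), u θ φ₁ = u θ φ₂

/-- Zonal on the coordinate chart `θ ∈ [0, π]`. -/
def ZonalOn (u : SphereFun) : Prop :=
  ∀ θ ∈ Set.Icc (0:ℝ) Real.pi, ∀ (φ₁ φ₂ : ℝ), u θ φ₁ = u θ φ₂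

/-- `2π`-periodicity in the longitude. -/
def PeriodicPhi (u : SphereFun) : Prop := ∀ θ φ, u θ (φ + 2*Real.pi) = u θ φ

/-- The advection term `U·∇f` for the velocity `U = ∇⊥Ψ`, i.e.
`(1/sinθ)∂_φΨ ∂_θf − ∂_θΨ (1/sinθ)∂_φf`. -/
def advect (Ψ f : SphereFun) : SphereFun := fun θ φ =>
  (1 / Real.sin θ) * dPhi Ψ θ φ * dTheta f θ φ
  - dTheta Ψ θ φ * ((1 / Real.sin θ) * dPhi f θ φ)

/-- Smoothness in the coordinates. -/
def SphSmooth (u : SphereFun) : Prop := ContDiff ℝ (⊤ : ℕ∞) (Function.uncurry u)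

/-- A function is trivial if it is a zonal function plus an element of
`span{Y₂^m : |m| ≤ 2}`; non-triviality is the negation of this. -/
def SphNontrivial (u : SphereFun) : Prop :=
  ¬ ∃ (z : SphereFun) (c : ℤ → ℝ), Zonal z ∧
      ∀ θ ∈ Set.Icc (0:ℝ) Real.pi, ∀ φ : ℝ,
        u θ φ = z θ φ + ∑ m ∈ Finset.Icc (-2 : ℤ) 2, c m * Ynm 2 m θ φ

/-- Real analyticity on the sphere, characterized by membership in a Gevrey class. -/
def RealAnalyticSphere (u : SphereFun) : Prop := ∃ lam > 0, gevNormSq lam u < ⊤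

/-!
If `ΔΦ = F (Φ - γ̃ cos θ)` for some `F`, then `Φ` is a travelling wave, because `-γ̃ ∂_φ + ∇⊥Φ·∇`
annihilates every function of `Φ - γ̃ cos θ`. Take `Φ = γ̃ cos θ + σ ψ` and `F` the sum of a
linear function close to `-6 s` and a small cubic term `δ s ^ 3`; the profile `ψ` is then a
perturbation of `z + ε w`, where `z = cos θ` and `w = sin² θ cos 2φ` satisfy `Δz = -2z` and
`Δw = -6w`. In the algebra of absolutely convergent series in the monomials `z ^ a w ^ b` with
`a + b` odd, the Laplacian is diagonal up to terms of degree lower by two or more, and scaling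
the monomials down makes these terms a small perturbation; so dividing by the diagonal solves the
equation up to an invertible operator, and the resonances in `z` and `w` are absorbed by the free
constants `σ` and `F'(0)`. The implicit function theorem in `δ` then produces `ψ`, and the
explicit first-order term in `δ` has a nonzero coefficient along `Y₄²`.
-/

section

open Filter Topology
open Polynomial hiding coeff
open scoped ContDiff

/-! ### The space `ℓ¹` and its universal property -/

/-- The Banach space `ℓ¹(ι)` of absolutely summable real families. -/
abbrev EllOne (ι : Type*) : Type _ := lp (fun _ : ι => ℝ) 1

namespace EllOne

variable {ι : Type*} {E : Type*} [NormedAddCommGroup E] [NormedSpace ℝ E]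

lemma summable_abs (u : EllOne ι) : Summable fun i => |u i| := by
  simpa using (lp.memℓp u).summable (by norm_num)

lemma norm_eq_tsum_abs (u : EllOne ι) : ‖u‖ = ∑' i, |u i| := by
  simp [lp.norm_eq_tsum_rpow (show 0 < (1 : ℝ≥0∞).toReal by norm_num) u]

lemma norm_smul_le_abs_mul {b : ι → E} {C : ℝ} (hb : ∀ i, ‖b i‖ ≤ C) (u : EllOne ι) (i : ι) :
    ‖u i • b i‖ ≤ |u i| * C := by
  rw [norm_smul, Real.norm_eq_abs]
  exact mul_le_mul_of_nonneg_left (hb i) (abs_nonneg _)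

lemma summable_norm_smul {b : ι → E} {C : ℝ} (hb : ∀ i, ‖b i‖ ≤ C) (u : EllOne ι) :
    Summable fun i => ‖u i • b i‖ :=
  .of_nonneg_of_le (fun _ => norm_nonneg _) (norm_smul_le_abs_mul hb u) (u.summable_abs.mul_right C)

lemma norm_tsum_smul_le {b : ι → E} {C : ℝ} (hb : ∀ i, ‖b i‖ ≤ C) (u : EllOne ι) :
    ‖∑' i, u i • b i‖ ≤ C * ‖u‖ := by
  rw [norm_eq_tsum_abs, mul_comm, ← tsum_mul_right]
  exact (norm_tsum_le_tsum_norm (summable_norm_smul hb u)).trans <|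
    (summable_norm_smul hb u).tsum_le_tsum (norm_smul_le_abs_mul hb u) (u.summable_abs.mul_right C)

/-- The continuous linear extension to `ℓ¹(ι)` of a bounded family `b`, thought of as the list of
values on the canonical basis. -/
def lift [CompleteSpace E] (b : ι → E) {C : ℝ} (hb : ∀ i, ‖b i‖ ≤ C) : EllOne ι →L[ℝ] E :=
  LinearMap.mkContinuous
    { toFun := fun u => ∑' i, u i • b i
      map_add' := fun u v => by
        simp only [lp.coeFn_add, Pi.add_apply, add_smul]
        exact (summable_norm_smul hb u).of_norm.tsum_add (summable_norm_smul hb v).of_norm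
      map_smul' := fun c u => by
        simp only [lp.coeFn_smul, Pi.smul_apply, smul_assoc, RingHom.id_apply]
        exact (summable_norm_smul hb u).of_norm.tsum_const_smul c }
    C (norm_tsum_smul_le hb)

lemma lift_apply [CompleteSpace E] (b : ι → E) {C : ℝ} (hb : ∀ i, ‖b i‖ ≤ C) (u : EllOne ι) :
    lift b hb u = ∑' i, u i • b i := rfl

lemma norm_lift_le [CompleteSpace E] {b : ι → E} {C : ℝ} (hC : 0 ≤ C) (hb : ∀ i, ‖b i‖ ≤ C) :
    ‖lift b hb‖ ≤ C :=
  (lift b hb).opNorm_le_bound hC (norm_tsum_smul_le hb)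

variable [DecidableEq ι]

/-- The canonical basis vector of `ℓ¹(ι)` at the index `i`. -/
def basisVec (i : ι) : EllOne ι := lp.single 1 i (1 : ℝ)

lemma norm_basisVec (i : ι) : ‖basisVec i‖ = 1 := by
  simp [basisVec, lp.norm_single]

lemma hasSum_smul_basisVec (u : EllOne ι) : HasSum (fun i => u i • basisVec i) u := by
  convert lp.hasSum_single (p := 1) (by norm_num) u using 2 with i
  rw [basisVec, ← lp.single_smul, smul_eq_mul, mul_one]

lemma basisVec_apply (i j : ι) : basisVec i j = if j = i then 1 else 0 := by
  simp [basisVec, Pi.single_apply]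

/-- The coordinate functional at the index `i`. -/
abbrev coord (i : ι) : EllOne ι →L[ℝ] ℝ := lp.evalCLM ℝ (fun _ : ι => ℝ) 1 i

lemma coord_basisVec (i j : ι) : coord j (basisVec i) = if j = i then 1 else 0 :=
  basisVec_apply i j

lemma lift_basisVec [CompleteSpace E] (b : ι → E) {C : ℝ} (hb : ∀ i, ‖b i‖ ≤ C) (i : ι) :
    lift b hb (basisVec i) = b i := by
  simp [lift_apply, basisVec_apply]

lemma clm_ext {f g : EllOne ι →L[ℝ] E} (h : ∀ i, f (basisVec i) = g (basisVec i)) : f = g := by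
  ext u
  have hf := (hasSum_smul_basisVec u).mapL f
  have hg := (hasSum_smul_basisVec u).mapL g
  simp only [map_smul, h] at hf hg
  exact hf.unique hg

lemma norm_apply_le {f : EllOne ι →L[ℝ] E} {C : ℝ} (h : ∀ i, ‖f (basisVec i)‖ ≤ C)
    (u : EllOne ι) : ‖f u‖ ≤ C * ‖u‖ := by
  have hu := (hasSum_smul_basisVec u).mapL f
  simp only [map_smul] at hu
  rw [← hu.tsum_eq]
  exact norm_tsum_smul_le h u

section TernaryProduct

variable (t : ι → ι → ι → ι)

/-- The trilinear product on `ℓ¹(ι)` extending a ternary operation `t` on the indices. -/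
def ternaryProduct : EllOne ι →L[ℝ] EllOne ι →L[ℝ] EllOne ι →L[ℝ] EllOne ι :=
  lift (C := 1) (fun i => lift (C := 1) (fun j => lift (C := 1) (fun k => basisVec (t i j k))
    fun _ => (norm_basisVec _).le) fun _ => norm_lift_le zero_le_one _)
    fun _ => norm_lift_le zero_le_one _

lemma ternaryProduct_basisVec (i j k : ι) :
    ternaryProduct t (basisVec i) (basisVec j) (basisVec k) = basisVec (t i j k) := by
  simp only [ternaryProduct, lift_basisVec]

variable {t}

lemma map_ternaryProduct {f : EllOne ι →L[ℝ] ℝ}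
    (hf : ∀ i j k, f (basisVec (t i j k)) = f (basisVec i) * f (basisVec j) * f (basisVec k))
    (u v w : EllOne ι) : f (ternaryProduct t u v w) = f u * f v * f w := by
  have third (i j : ι) : f ∘L ternaryProduct t (basisVec i) (basisVec j)
      = (f (basisVec i) * f (basisVec j)) • f :=
    clm_ext fun k => by simp [ternaryProduct_basisVec, hf]
  have second (i : ι) : f ∘L (ternaryProduct t (basisVec i)).flip w = (f (basisVec i) * f w) • f :=
    clm_ext fun j => by
      have := DFunLike.congr_fun (third i j) w
      simp only [ContinuousLinearMap.comp_apply, ContinuousLinearMap.flip_apply,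
        smul_apply, smul_eq_mul] at this ⊢
      rw [this]; ring
  have first : f ∘L ((ternaryProduct t).flip v).flip w = (f v * f w) • f :=
    clm_ext fun i => by
      have := DFunLike.congr_fun (second i) v
      simp only [ContinuousLinearMap.comp_apply, ContinuousLinearMap.flip_apply,
        smul_apply, smul_eq_mul] at this ⊢
      rw [this]; ring
  have := DFunLike.congr_fun first u
  simp only [ContinuousLinearMap.comp_apply, ContinuousLinearMap.flip_apply,
    smul_apply, smul_eq_mul] at this
  rw [this]; ring

end TernaryProduct

end EllOne

/-! ### Families of functions with uniformly bounded derivatives -/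

section UniformlySmooth

variable {E : Type*} [NormedAddCommGroup E] [NormedSpace ℝ E]

/-- The smooth function `f` is of exponential type: its `k`-th derivative is at most `c * A ^ k`. -/
structure HasExpTypeBound (f : E → ℝ) (c A : ℝ) : Prop where
  contDiff : ContDiff ℝ ∞ f
  norm_iteratedFDeriv_le : ∀ k x, ‖iteratedFDeriv ℝ k f x‖ ≤ c * A ^ k

namespace HasExpTypeBound

variable {f g : E → ℝ} {c c' A A' : ℝ}

lemma mul (hf : HasExpTypeBound f c A) (hg : HasExpTypeBound g c' A') :
    HasExpTypeBound (fun x => f x * g x) (c * c') (A + A') := by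
  refine ⟨hf.contDiff.mul hg.contDiff, fun k x => ?_⟩
  refine (norm_iteratedFDeriv_mul_le hf.contDiff hg.contDiff x (mod_cast le_top)).trans ?_
  rw [add_pow, Finset.mul_sum]
  refine Finset.sum_le_sum fun i _ => ?_
  have hfi := hf.norm_iteratedFDeriv_le i x
  have hgi := hg.norm_iteratedFDeriv_le (k - i) x
  calc (k.choose i : ℝ) * ‖iteratedFDeriv ℝ i f x‖ * ‖iteratedFDeriv ℝ (k - i) g x‖
      = k.choose i * (‖iteratedFDeriv ℝ i f x‖ * ‖iteratedFDeriv ℝ (k - i) g x‖) := by ring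
    _ ≤ k.choose i * ((c * A ^ i) * (c' * A' ^ (k - i))) := by
        gcongr
        exact (norm_nonneg _).trans hfi
    _ = c * c' * (A ^ i * A' ^ (k - i) * k.choose i) := by ring

lemma const (a : ℝ) : HasExpTypeBound (fun _ : E => a) |a| 0 := by
  refine ⟨contDiff_const, fun k x => ?_⟩
  cases k with
  | zero => simp
  | succ k => simp [iteratedFDeriv_succ_const]

lemma pow (hf : HasExpTypeBound f 1 A) (n : ℕ) :
    HasExpTypeBound (fun x => f x ^ n) 1 (n * A) := by
  induction n with
  | zero => simpa using const (E := E) 1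
  | succ n ih =>
    have := ih.mul hf
    simp only [pow_succ]
    convert this using 1
    · rw [one_mul]
    · push_cast; ring

lemma comp_clm {h : ℝ → ℝ} (hh : ContDiff ℝ ∞ h) (hb : ∀ n x, |iteratedDeriv n h x| ≤ 1)
    {T : E →L[ℝ] ℝ} (hT : ‖T‖ ≤ A) : HasExpTypeBound (fun x => h (T x)) 1 A := by
  refine ⟨hh.comp T.contDiff, fun k x => ?_⟩
  change ‖iteratedFDeriv ℝ k (h ∘ T) x‖ ≤ _
  rw [T.iteratedFDeriv_comp_right hh x (mod_cast le_top)]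
  refine (ContinuousMultilinearMap.norm_compContinuousLinearMap_le _ _).trans ?_
  rw [norm_iteratedFDeriv_eq_norm_iteratedDeriv, Finset.prod_const, Finset.card_univ,
    Fintype.card_fin]
  exact mul_le_mul (hb _ _) (pow_le_pow_left₀ (norm_nonneg _) hT k) (by positivity) zero_le_one

end HasExpTypeBound

variable {ι : Type*} {G : ι → E → ℝ}

/-- A family of smooth functions all of whose derivatives are bounded, uniformly over the family
and over the domain. -/
structure UniformlySmooth (G : ι → E → ℝ) : Prop where
  contDiff : ∀ i, ContDiff ℝ ∞ (G i)
  exists_norm_iteratedFDeriv_le : ∀ k : ℕ, ∃ C, ∀ i x, ‖iteratedFDeriv ℝ k (G i) x‖ ≤ C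

namespace UniformlySmooth

lemma exists_abs_le (hG : UniformlySmooth G) : ∃ C, ∀ i x, |G i x| ≤ C := by
  simpa using hG.exists_norm_iteratedFDeriv_le 0

lemma summable (hG : UniformlySmooth G) (u : EllOne ι) (x : E) :
    Summable fun i => u i * G i x := by
  obtain ⟨C, hC⟩ := hG.exists_abs_le
  exact (EllOne.summable_norm_smul (b := fun i => G i x) (fun i => hC i x) u).of_norm

lemma contDiff_tsum (hG : UniformlySmooth G) (u : EllOne ι) :
    ContDiff ℝ ∞ fun x => ∑' i, u i * G i x := by
  choose C hC using hG.exists_norm_iteratedFDeriv_le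
  refine _root_.contDiff_tsum (v := fun k i => |u i| * C k)
    (fun i => contDiff_const.mul (hG.contDiff i)) (fun k _ => u.summable_abs.mul_right _)
    (fun k i x _ => ?_)
  simp only [← smul_eq_mul (u i)]
  rw [iteratedFDeriv_const_smul_apply' ((hG.contDiff i).contDiffAt.of_le (mod_cast le_top))]
  exact EllOne.norm_smul_le_abs_mul (b := fun i => iteratedFDeriv ℝ k (G i) x)
    (fun i => hC k i x) u i

lemma fderiv_apply (hG : UniformlySmooth G) (v : E) :
    UniformlySmooth fun i x => fderiv ℝ (G i) x v := by
  have hd (i : ι) : ContDiff ℝ ∞ (fderiv ℝ (G i)) := (hG.contDiff i).fderiv_right (by simp)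
  refine ⟨fun i => (hd i).clm_apply contDiff_const, fun k => ?_⟩
  obtain ⟨C, hC⟩ := hG.exists_norm_iteratedFDeriv_le (k + 1)
  refine ⟨‖v‖ * C, fun i x => ?_⟩
  refine (norm_iteratedFDeriv_clm_apply_const (hd i).contDiffAt (mod_cast le_top)).trans ?_
  rw [norm_iteratedFDeriv_fderiv]
  exact mul_le_mul_of_nonneg_left (hC i x) (norm_nonneg v)

lemma fderiv_tsum_apply (hG : UniformlySmooth G) (u : EllOne ι) (x v : E) :
    fderiv ℝ (fun y => ∑' i, u i * G i y) x v = ∑' i, u i * fderiv ℝ (G i) x v := by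
  obtain ⟨C, hC⟩ := hG.exists_norm_iteratedFDeriv_le 1
  have hC' (i : ι) (y : E) : ‖fderiv ℝ (G i) y‖ ≤ C := by
    simpa only [norm_iteratedFDeriv_one] using hC i y
  have hd (i : ι) : Differentiable ℝ (G i) := (hG.contDiff i).differentiable (by simp)
  have hsmul (i : ι) (y : E) : fderiv ℝ (fun y => u i * G i y) y = u i • fderiv ℝ (G i) y :=
    fderiv_const_mul (hd i y) (u i)
  rw [_root_.fderiv_tsum_apply (u.summable_abs.mul_right C) (fun i => (hd i).const_mul (u i))
    (fun i y => ?_) (hG.summable u x) x]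
  · simp only [hsmul]
    exact (ContinuousLinearMap.apply ℝ ℝ v).map_tsum
      (EllOne.summable_norm_smul (fun i => hC' i x) u).of_norm
  · rw [hsmul]
    exact EllOne.norm_smul_le_abs_mul (fun i => hC' i y) u i

end UniformlySmooth

end UniformlySmooth

/-! ### Calculus in the colatitude-longitude chart -/

namespace SphSmooth

variable {f : SphereFun}

lemma hasDerivAt_theta_fderiv (hf : SphSmooth f) (θ φ : ℝ) :
    HasDerivAt (fun t => f t φ) (fderiv ℝ (Function.uncurry f) (θ, φ) (1, 0)) θ :=
  (hf.differentiable (by simp) (θ, φ)).hasFDerivAt.comp_hasDerivAt θ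
    (f := fun t : ℝ => (t, φ)) ((hasDerivAt_id θ).prodMk (hasDerivAt_const _ _))

lemma hasDerivAt_phi_fderiv (hf : SphSmooth f) (θ φ : ℝ) :
    HasDerivAt (fun t => f θ t) (fderiv ℝ (Function.uncurry f) (θ, φ) (0, 1)) φ :=
  (hf.differentiable (by simp) (θ, φ)).hasFDerivAt.comp_hasDerivAt φ
    (f := fun t : ℝ => (θ, t)) ((hasDerivAt_const _ _).prodMk (hasDerivAt_id φ))

lemma hasDerivAt_theta (hf : SphSmooth f) (θ φ : ℝ) :
    HasDerivAt (fun t => f t φ) (dTheta f θ φ) θ :=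
  (hf.hasDerivAt_theta_fderiv θ φ).differentiableAt.hasDerivAt

lemma hasDerivAt_phi (hf : SphSmooth f) (θ φ : ℝ) :
    HasDerivAt (fun t => f θ t) (dPhi f θ φ) φ :=
  (hf.hasDerivAt_phi_fderiv θ φ).differentiableAt.hasDerivAt

lemma uncurry_dTheta (hf : SphSmooth f) :
    Function.uncurry (dTheta f) = fun x => fderiv ℝ (Function.uncurry f) x (1, 0) :=
  funext fun x => (hf.hasDerivAt_theta_fderiv x.1 x.2).deriv

lemma uncurry_dPhi (hf : SphSmooth f) :
    Function.uncurry (dPhi f) = fun x => fderiv ℝ (Function.uncurry f) x (0, 1) :=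
  funext fun x => (hf.hasDerivAt_phi_fderiv x.1 x.2).deriv

lemma dTheta (hf : SphSmooth f) : SphSmooth (dTheta f) := by
  rw [SphSmooth, hf.uncurry_dTheta]
  exact (hf.fderiv_right (m := ∞) (by simp)).clm_apply contDiff_const

lemma lapS_eq (hf : SphSmooth f) (θ φ : ℝ) :
    lapS f θ φ = 1 / Real.sin θ *
        (Real.cos θ * _root_.dTheta f θ φ + Real.sin θ * _root_.dTheta (_root_.dTheta f) θ φ)
      + 1 / Real.sin θ ^ 2 * dPhi (dPhi f) θ φ := by
  rw [lapS, ((Real.hasDerivAt_sin θ).fun_mul (hf.dTheta.hasDerivAt_theta θ φ)).deriv]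

end SphSmooth

lemma travellingWave_of_lapS_eq_comp {Φ : SphereFun} (hΦ : SphSmooth Φ) {F : ℝ → ℝ}
    (hF : Differentiable ℝ F) {a : ℝ}
    (hlap : ∀ θ ∈ Set.Ioo 0 Real.pi, ∀ φ, lapS Φ θ φ = F (Φ θ φ - a * Real.cos θ))
    {θ : ℝ} (hθ : θ ∈ Set.Ioo 0 Real.pi) (φ : ℝ) :
    -a * dPhi (lapS Φ) θ φ + advect Φ (lapS Φ) θ φ = 0 := by
  set F' := deriv F (Φ θ φ - a * Real.cos θ)
  have hF' : HasDerivAt F F' (Φ θ φ - a * Real.cos θ) := (hF _).hasDerivAt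
  have hθ_deriv : dTheta (lapS Φ) θ φ = F' * (dTheta Φ θ φ + a * Real.sin θ) := by
    have hrel : HasDerivAt (fun t => Φ t φ - a * Real.cos t) (dTheta Φ θ φ + a * Real.sin θ) θ := by
      simpa using (hΦ.hasDerivAt_theta θ φ).fun_sub ((Real.hasDerivAt_cos θ).const_mul a)
    refine ((hF'.comp θ hrel).congr_of_eventuallyEq ?_).deriv
    filter_upwards [Ioo_mem_nhds hθ.1 hθ.2] with t ht using hlap t ht φ
  have hφ_deriv : dPhi (lapS Φ) θ φ = F' * dPhi Φ θ φ :=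
    ((hF'.comp φ ((hΦ.hasDerivAt_phi θ φ).sub_const _)).congr_of_eventuallyEq
      (.of_forall fun t => hlap θ hθ t)).deriv
  have hsin : Real.sin θ ≠ 0 := (Real.sin_pos_of_mem_Ioo hθ).ne'
  rw [advect, hθ_deriv, hφ_deriv]
  field_simp
  ring

section Series

variable {ι : Type*} {G : ι → SphereFun}

lemma dTheta_tsum (hG : UniformlySmooth fun i => Function.uncurry (G i)) (u : EllOne ι) :
    dTheta (fun θ φ => ∑' i, u i * G i θ φ) = fun θ φ => ∑' i, u i * dTheta (G i) θ φ := by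
  have hsmooth : SphSmooth fun θ φ => ∑' i, u i * G i θ φ := hG.contDiff_tsum u
  refine funext₂ fun θ φ => (hsmooth.hasDerivAt_theta_fderiv θ φ).deriv.trans <|
    (hG.fderiv_tsum_apply u (θ, φ) (1, 0)).trans (tsum_congr fun i => ?_)
  rw [← (SphSmooth.hasDerivAt_theta_fderiv (hG.contDiff i) θ φ).deriv, dTheta]

lemma dPhi_tsum (hG : UniformlySmooth fun i => Function.uncurry (G i)) (u : EllOne ι) :
    dPhi (fun θ φ => ∑' i, u i * G i θ φ) = fun θ φ => ∑' i, u i * dPhi (G i) θ φ := by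
  have hsmooth : SphSmooth fun θ φ => ∑' i, u i * G i θ φ := hG.contDiff_tsum u
  refine funext₂ fun θ φ => (hsmooth.hasDerivAt_phi_fderiv θ φ).deriv.trans <|
    (hG.fderiv_tsum_apply u (θ, φ) (0, 1)).trans (tsum_congr fun i => ?_)
  rw [← (SphSmooth.hasDerivAt_phi_fderiv (hG.contDiff i) θ φ).deriv, dPhi]

lemma UniformlySmooth.dTheta (hG : UniformlySmooth fun i => Function.uncurry (G i)) :
    UniformlySmooth fun i => Function.uncurry (dTheta (G i)) := by
  simpa only [SphSmooth.uncurry_dTheta (hG.contDiff _)] using hG.fderiv_apply (1, 0)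

lemma UniformlySmooth.dPhi (hG : UniformlySmooth fun i => Function.uncurry (G i)) :
    UniformlySmooth fun i => Function.uncurry (dPhi (G i)) := by
  simpa only [SphSmooth.uncurry_dPhi (hG.contDiff _)] using hG.fderiv_apply (0, 1)

lemma lapS_tsum (hG : UniformlySmooth fun i => Function.uncurry (G i)) (u : EllOne ι) (θ φ : ℝ) :
    lapS (fun θ φ => ∑' i, u i * G i θ φ) θ φ = ∑' i, u i * lapS (G i) θ φ := by
  have hsum : SphSmooth fun θ φ => ∑' i, u i * G i θ φ := hG.contDiff_tsum u
  rw [hsum.lapS_eq, dTheta_tsum hG, dTheta_tsum hG.dTheta, dPhi_tsum hG, dPhi_tsum hG.dPhi]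
  have h₁ := hG.dTheta.summable u (θ, φ)
  have h₂ := hG.dTheta.dTheta.summable u (θ, φ)
  have h₃ := hG.dPhi.dPhi.summable u (θ, φ)
  simp only [Function.uncurry_apply_pair] at h₁ h₂ h₃
  simp only [← tsum_mul_left]
  rw [← (h₁.mul_left _).tsum_add (h₂.mul_left _), ← tsum_mul_left,
    ← (((h₁.mul_left _).add (h₂.mul_left _)).mul_left _).tsum_add (h₃.mul_left _)]
  refine tsum_congr fun i => ?_
  rw [SphSmooth.lapS_eq (hG.contDiff i)]
  ring

lemma exists_abs_lapS_le (hG : UniformlySmooth fun i => Function.uncurry (G i)) (θ φ : ℝ) :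
    ∃ C, ∀ i, |lapS (G i) θ φ| ≤ C := by
  obtain ⟨C₁, h₁⟩ := hG.dTheta.exists_abs_le
  obtain ⟨C₂, h₂⟩ := hG.dTheta.dTheta.exists_abs_le
  obtain ⟨C₃, h₃⟩ := hG.dPhi.dPhi.exists_abs_le
  refine ⟨|1 / Real.sin θ| * (|Real.cos θ| * C₁ + |Real.sin θ| * C₂)
    + |1 / Real.sin θ ^ 2| * C₃, fun i => ?_⟩
  rw [SphSmooth.lapS_eq (hG.contDiff i)]
  refine (abs_add_le _ _).trans ?_
  rw [abs_mul, abs_mul]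
  gcongr
  · refine (abs_add_le _ _).trans ?_
    rw [abs_mul, abs_mul]
    gcongr
    · exact h₁ i (θ, φ)
    · exact h₂ i (θ, φ)
  · exact h₃ i (θ, φ)

lemma exists_clm_lapS_tsum (hG : UniformlySmooth fun i => Function.uncurry (G i)) (θ φ : ℝ) :
    ∃ L : EllOne ι →L[ℝ] ℝ, ∀ u : EllOne ι, L u = lapS (fun θ φ => ∑' i, u i * G i θ φ) θ φ := by
  obtain ⟨C, hC⟩ := exists_abs_lapS_le hG θ φ
  exact ⟨EllOne.lift (fun i => lapS (G i) θ φ) hC, fun u => (lapS_tsum hG u θ φ).symm⟩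

end Series

lemma lapS_eval_cos_mul (p : ℝ[X]) {T T' T'' : ℝ → ℝ} (hT : ∀ φ, HasDerivAt T (T' φ) φ)
    (hT' : ∀ φ, HasDerivAt T' (T'' φ) φ) {θ : ℝ} (hθ : Real.sin θ ≠ 0) (φ : ℝ) :
    lapS (fun θ φ => p.eval (Real.cos θ) * T φ) θ φ
      = (derivative ((1 - X ^ 2) * derivative p)).eval (Real.cos θ) * T φ
        + p.eval (Real.cos θ) * T'' φ / Real.sin θ ^ 2 := by
  have eval_cos (q : ℝ[X]) (t : ℝ) : HasDerivAt (fun t => q.eval (Real.cos t))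
      (-((derivative q).eval (Real.cos t) * Real.sin t)) t := by
    rw [← mul_neg]
    exact (q.hasDerivAt (Real.cos t)).comp t (Real.hasDerivAt_cos t)
  have hφφ : dPhi (dPhi fun θ φ => p.eval (Real.cos θ) * T φ) θ φ
      = p.eval (Real.cos θ) * T'' φ := by
    have hφ : dPhi (fun θ φ => p.eval (Real.cos θ) * T φ)
        = fun θ φ => p.eval (Real.cos θ) * T' φ :=
      funext₂ fun θ φ => ((hT φ).const_mul (p.eval (Real.cos θ))).deriv
    rw [hφ]
    exact ((hT' φ).const_mul (p.eval (Real.cos θ))).deriv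
  have hflux : (fun t => Real.sin t * dTheta (fun θ φ => p.eval (Real.cos θ) * T φ) t φ)
      = fun t => -T φ * ((1 - X ^ 2) * derivative p).eval (Real.cos t) := by
    funext t
    rw [dTheta, ((eval_cos p t).mul_const (T φ)).deriv]
    simp only [eval_mul, eval_sub, eval_one, eval_pow, eval_X]
    rw [← Real.sin_sq]
    ring
  rw [lapS, hφφ, hflux, ((eval_cos _ θ).const_mul (-T φ)).deriv]
  field_simp

lemma lapS_const_mul (c : ℝ) (f : SphereFun) (θ φ : ℝ) :
    lapS (fun θ φ => c * f θ φ) θ φ = c * lapS f θ φ := by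
  simp only [lapS, dTheta, dPhi, deriv_const_mul_field', mul_left_comm _ c]
  ring

/-! ### Monomials in `z = cos θ` and `w = sin² θ cos 2φ` -/

lemma derivative_one_sub_sq_mul_derivative_monomial (a b : ℕ) :
    derivative ((1 - X ^ 2) * derivative (X ^ a * (1 - X ^ 2) ^ b)) =
      C (-(((a : ℝ) + 2 * b) * (a + 2 * b + 1))) * (X ^ a * (1 - X ^ 2) ^ b)
      + C ((a : ℝ) * (a - 1)) * (X ^ (a - 2) * (1 - X ^ 2) ^ b)
      + C (4 * (b : ℝ) ^ 2) * (X ^ a * (1 - X ^ 2) ^ (b - 1)) := by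
  refine Polynomial.funext fun x => ?_
  rcases a with _ | _ | a <;> rcases b with _ | _ | b <;>
    simp [derivative_pow] <;> ring

lemma hasDerivAt_cos_two_mul_pow (b : ℕ) (φ : ℝ) :
    HasDerivAt (fun φ => Real.cos (2 * φ) ^ b)
      (-(2 * b) * (Real.cos (2 * φ) ^ (b - 1) * Real.sin (2 * φ))) φ := by
  refine (((hasDerivAt_id' φ).const_mul 2).cos.fun_pow b).congr_deriv ?_
  ring

lemma hasDerivAt_deriv_cos_two_mul_pow (b : ℕ) (φ : ℝ) :
    HasDerivAt (fun φ => -(2 * b) * (Real.cos (2 * φ) ^ (b - 1) * Real.sin (2 * φ)))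
      (4 * b * (b - 1) * Real.cos (2 * φ) ^ (b - 2) - 4 * b ^ 2 * Real.cos (2 * φ) ^ b) φ := by
  have hsin : HasDerivAt (fun φ => Real.sin (2 * φ)) (Real.cos (2 * φ) * (2 * 1)) φ :=
    ((hasDerivAt_id' φ).const_mul 2).sin
  refine (((hasDerivAt_cos_two_mul_pow (b - 1) φ).fun_mul hsin).const_mul _).congr_deriv ?_
  rcases b with _ | _ | b
  · simp
  · norm_num
    ring
  · push_cast [Nat.add_sub_cancel, Nat.add_one_sub_one]
    linear_combination (4 * (b + 2 : ℝ) * (b + 1) * Real.cos (2 * φ) ^ b)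
      * Real.sin_sq_add_cos_sq (2 * φ)

lemma lapS_cos_pow_mul_pow (a b : ℕ) {θ : ℝ} (hθ : Real.sin θ ≠ 0) (φ : ℝ) :
    lapS (fun θ φ => Real.cos θ ^ a * (Real.sin θ ^ 2 * Real.cos (2 * φ)) ^ b) θ φ =
      -((a + 2 * b) * (a + 2 * b + 1)) *
          (Real.cos θ ^ a * (Real.sin θ ^ 2 * Real.cos (2 * φ)) ^ b)
        + a * (a - 1) * (Real.cos θ ^ (a - 2) * (Real.sin θ ^ 2 * Real.cos (2 * φ)) ^ b)
        + 4 * b * (b - 1) * (Real.cos θ ^ a * (Real.sin θ ^ 2 * Real.cos (2 * φ)) ^ (b - 2)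
          - Real.cos θ ^ (a + 2) * (Real.sin θ ^ 2 * Real.cos (2 * φ)) ^ (b - 2)) := by
  have hsep : (fun θ φ => Real.cos θ ^ a * (Real.sin θ ^ 2 * Real.cos (2 * φ)) ^ b)
      = fun θ φ => (X ^ a * (1 - X ^ 2) ^ b : ℝ[X]).eval (Real.cos θ) * Real.cos (2 * φ) ^ b := by
    funext θ φ
    simp only [eval_mul, eval_pow, eval_sub, eval_one, eval_X, ← Real.sin_sq]
    ring
  rw [hsep, lapS_eval_cos_mul _ (hasDerivAt_cos_two_mul_pow b) (hasDerivAt_deriv_cos_two_mul_pow b)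
    hθ, derivative_one_sub_sq_mul_derivative_monomial]
  simp only [eval_add, eval_mul, eval_C, eval_pow, eval_sub, eval_one, eval_X, ← Real.sin_sq]
  have hz : Real.cos θ ^ 2 = 1 - Real.sin θ ^ 2 := Real.cos_sq' θ
  rcases b with _ | _ | b
  · simp
  · field_simp
    simp
    ring
  · rw [pow_add _ a 2, hz]
    field_simp
    push_cast [Nat.add_sub_cancel, Nat.add_one_sub_one]
    ring

/-- The exponents `(a, b)` of the monomials `z ^ a * w ^ b` with `a + b` odd. The parity condition
is stable under products of three monomials, and it excludes the constants and `z ^ 2`, hence the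
zonal harmonic of degree `2`, from the kernel of `Δ + 6`. -/
abbrev OddPair : Type := {p : ℕ × ℕ // Odd (p.1 + p.2)}

namespace OddPair

/-- The exponents of the product of three monomials. -/
def tripleSum (p q r : OddPair) : OddPair :=
  ⟨p.1 + q.1 + r.1, by
    have hp := p.2
    have hq := q.2
    have hr := r.2
    simp only [Nat.odd_iff, Prod.fst_add, Prod.snd_add] at hp hq hr ⊢
    omega⟩

/-- The degree of `z ^ a * w ^ b` as a polynomial on the ambient space. -/
def degree (p : OddPair) : ℕ := p.1.1 + 2 * p.1.2

/-- The exponents of `z`. -/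
def z : OddPair := ⟨(1, 0), by decide⟩

/-- The exponents of `w`. -/
def w : OddPair := ⟨(0, 1), by decide⟩

lemma eq_z_or_eq_w {p : OddPair} (hp : p.degree < 3) : p = z ∨ p = w := by
  obtain ⟨⟨a, b⟩, hab⟩ := p
  simp only [degree, Nat.odd_iff] at hp hab
  simp only [z, w, Subtype.mk.injEq, Prod.mk.injEq]
  omega

end OddPair

/-- The basis vector of `ℓ¹(OddPair)` at `(a, b)`, with the junk value `0` when `a + b` is even. -/
def monomialVec (a b : ℕ) : EllOne OddPair :=
  if h : Odd (a + b) then EllOne.basisVec ⟨(a, b), h⟩ else 0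

lemma monomialVec_of_odd {a b : ℕ} (h : Odd (a + b)) :
    monomialVec a b = EllOne.basisVec ⟨(a, b), h⟩ := dif_pos h

lemma norm_monomialVec_le (a b : ℕ) : ‖monomialVec a b‖ ≤ 1 := by
  rw [monomialVec]
  split_ifs
  · exact (EllOne.norm_basisVec _).le
  · simp

/-- The weight attached to each degree; any sufficiently small positive number would do. -/
def monomialScale : ℝ := 1 / 1000

local notation "ρ" => monomialScale

lemma monomialScale_pos : 0 < ρ := by norm_num [monomialScale]

lemma monomialScale_lt_one : ρ < 1 := by norm_num [monomialScale]

/-- The monomial `z ^ a * w ^ b` in `z = cos θ` and `w = sin² θ cos 2φ`, scaled by `ρ ^ degree`. -/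
def oddMonomial (p : OddPair) : SphereFun := fun θ φ =>
  ρ ^ p.degree * (Real.cos θ ^ p.1.1 * (Real.sin θ ^ 2 * Real.cos (2 * φ)) ^ p.1.2)

lemma hasExpTypeBound_oddMonomial (p : OddPair) :
    HasExpTypeBound (Function.uncurry (oddMonomial p)) (ρ ^ p.degree)
      (p.1.1 + 4 * p.1.2) := by
  have hcos : HasExpTypeBound (fun x : ℝ × ℝ => Real.cos x.1) 1 1 :=
    .comp_clm Real.contDiff_cos Real.abs_iteratedDeriv_cos_le_one
      (T := ContinuousLinearMap.fst ℝ ℝ ℝ) (ContinuousLinearMap.norm_fst_le ..)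
  have hsin : HasExpTypeBound (fun x : ℝ × ℝ => Real.sin x.1) 1 1 :=
    .comp_clm Real.contDiff_sin Real.abs_iteratedDeriv_sin_le_one
      (T := ContinuousLinearMap.fst ℝ ℝ ℝ) (ContinuousLinearMap.norm_fst_le ..)
  have hnorm : ‖(2 : ℝ) • ContinuousLinearMap.snd ℝ ℝ ℝ‖ ≤ 2 := by
    rw [norm_smul, Real.norm_ofNat]
    linarith [ContinuousLinearMap.norm_snd_le ℝ ℝ ℝ]
  have hcos₂ : HasExpTypeBound (fun x : ℝ × ℝ => Real.cos (2 * x.2)) 1 2 :=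
    .comp_clm Real.contDiff_cos Real.abs_iteratedDeriv_cos_le_one hnorm
  convert (HasExpTypeBound.const (ρ ^ p.degree)).mul
    ((hcos.pow p.1.1).mul (HasExpTypeBound.pow (by simpa using (hsin.pow 2).mul hcos₂) p.1.2))
    using 1
  · rfl
  · rw [abs_of_pos (pow_pos monomialScale_pos _), mul_one, mul_one]
  · ring

lemma uniformlySmooth_oddMonomial :
    UniformlySmooth fun p => Function.uncurry (oddMonomial p) := by
  refine ⟨fun p => (hasExpTypeBound_oddMonomial p).contDiff, fun k => ?_⟩
  obtain ⟨C, hC⟩ := (tendsto_pow_const_mul_const_pow_of_lt_one k monomialScale_pos.le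
    monomialScale_lt_one).bddAbove_range
  refine ⟨2 ^ k * C, fun p x => ?_⟩
  calc ‖iteratedFDeriv ℝ k (Function.uncurry (oddMonomial p)) x‖
      ≤ ρ ^ p.degree * (p.1.1 + 4 * p.1.2) ^ k :=
        (hasExpTypeBound_oddMonomial p).norm_iteratedFDeriv_le k x
    _ ≤ ρ ^ p.degree * (2 * p.degree) ^ k := by
        have := monomialScale_pos
        gcongr
        rw [OddPair.degree]
        push_cast
        linarith [p.1.1.cast_nonneg (α := ℝ)]
    _ = 2 ^ k * (p.degree ^ k * ρ ^ p.degree) := by rw [mul_pow]; ring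
    _ ≤ 2 ^ k * C := by gcongr; exact hC ⟨p.degree, rfl⟩

lemma abs_oddMonomial_le (p : OddPair) (θ φ : ℝ) : |oddMonomial p θ φ| ≤ ρ ^ p.degree := by
  simpa using (hasExpTypeBound_oddMonomial p).norm_iteratedFDeriv_le 0 (θ, φ)

lemma abs_oddMonomial_le_one (p : OddPair) (θ φ : ℝ) : |oddMonomial p θ φ| ≤ 1 :=
  (abs_oddMonomial_le p θ φ).trans
    (pow_le_one₀ monomialScale_pos.le monomialScale_lt_one.le)

/-- The value at `(θ, φ)` of the series with given monomial coefficients. -/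
def evalSeries (θ φ : ℝ) : EllOne OddPair →L[ℝ] ℝ :=
  EllOne.lift (fun p => oddMonomial p θ φ) fun p => abs_oddMonomial_le_one p θ φ

/-- The function on the sphere with given monomial coefficients. -/
def oddSeries (u : EllOne OddPair) : SphereFun := fun θ φ => evalSeries θ φ u

lemma oddSeries_eq_tsum (u : EllOne OddPair) :
    oddSeries u = fun θ φ => ∑' p, u p * oddMonomial p θ φ := rfl

lemma sphSmooth_oddSeries (u : EllOne OddPair) : SphSmooth (oddSeries u) :=
  uniformlySmooth_oddMonomial.contDiff_tsum u

lemma evalSeries_basisVec (θ φ : ℝ) (p : OddPair) :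
    evalSeries θ φ (EllOne.basisVec p) = oddMonomial p θ φ :=
  EllOne.lift_basisVec _ _ p

lemma evalSeries_monomialVec {a b : ℕ} (h : Odd (a + b)) (θ φ : ℝ) :
    evalSeries θ φ (monomialVec a b) =
      ρ ^ (a + 2 * b) * (Real.cos θ ^ a * (Real.sin θ ^ 2 * Real.cos (2 * φ)) ^ b) := by
  rw [monomialVec_of_odd h, evalSeries_basisVec]
  rfl

/-- The product of three series, on the level of coefficients. -/
abbrev tripleProduct : EllOne OddPair →L[ℝ] EllOne OddPair →L[ℝ] EllOne OddPair →L[ℝ]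
    EllOne OddPair := EllOne.ternaryProduct OddPair.tripleSum

lemma evalSeries_tripleProduct (θ φ : ℝ) (u v w : EllOne OddPair) :
    evalSeries θ φ (tripleProduct u v w)
      = evalSeries θ φ u * evalSeries θ φ v * evalSeries θ φ w := by
  refine EllOne.map_ternaryProduct (fun p q r => ?_) u v w
  simp only [evalSeries_basisVec, oddMonomial, OddPair.tripleSum, OddPair.degree, Prod.fst_add,
    Prod.snd_add]
  ring

/-! ### A parametrix for `Δ + 6` -/

/-- The lower order part of the Laplacian of the monomial `p`. -/
def lapRemainder (p : OddPair) : EllOne OddPair :=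
  (ρ ^ 2 * (p.1.1 * (p.1.1 - 1))) • monomialVec (p.1.1 - 2) p.1.2
    + (4 * (p.1.2 * (p.1.2 - 1)) : ℝ) •
      (ρ ^ 4 • monomialVec p.1.1 (p.1.2 - 2) - ρ ^ 2 • monomialVec (p.1.1 + 2) (p.1.2 - 2))

lemma norm_lapRemainder_le (p : OddPair) : ‖lapRemainder p‖ ≤ 2 * ρ ^ 2 * (p.degree : ℝ) ^ 2 := by
  have cast_mul_sub_one_nonneg (a : ℕ) : (0 : ℝ) ≤ a * (a - 1) := by
    rcases a with _ | a
    · simp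
    · push_cast; simp only [add_sub_cancel_right]; positivity
  have norm_smul_monomialVec_le {c : ℝ} (hc : 0 ≤ c) (a b : ℕ) : ‖c • monomialVec a b‖ ≤ c := by
    rw [norm_smul, Real.norm_of_nonneg hc]
    exact mul_le_of_le_one_right hc (norm_monomialVec_le a b)
  obtain ⟨⟨a, b⟩, hab⟩ := p
  have ha := cast_mul_sub_one_nonneg a
  have hb := cast_mul_sub_one_nonneg b
  have hρ : ρ ^ 4 ≤ ρ ^ 2 :=
    pow_le_pow_of_le_one monomialScale_pos.le monomialScale_lt_one.le (by norm_num)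
  calc ‖lapRemainder ⟨(a, b), hab⟩‖
      ≤ ρ ^ 2 * (a * (a - 1)) + 4 * (b * (b - 1)) * (ρ ^ 4 + ρ ^ 2) := by
        refine norm_add_le_of_le (norm_smul_monomialVec_le (by positivity) _ _) ?_
        rw [norm_smul, Real.norm_of_nonneg (by positivity)]
        gcongr
        exact norm_sub_le_of_le (norm_smul_monomialVec_le (by positivity) _ _)
          (norm_smul_monomialVec_le (by positivity) _ _)
    _ ≤ ρ ^ 2 * (a * (a - 1)) + 4 * (b * (b - 1)) * (ρ ^ 2 + ρ ^ 2) := by gcongr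
    _ = ρ ^ 2 * (a * (a - 1) + 8 * (b * (b - 1))) := by ring
    _ ≤ ρ ^ 2 * (2 * (a + 2 * b) ^ 2) := by
        gcongr
        nlinarith [mul_nonneg a.cast_nonneg (α := ℝ) b.cast_nonneg, a.cast_nonneg (α := ℝ),
          b.cast_nonneg (α := ℝ)]
    _ = 2 * ρ ^ 2 * (OddPair.degree ⟨(a, b), hab⟩ : ℝ) ^ 2 := by
        simp only [OddPair.degree]; push_cast; ring

lemma evalSeries_lapRemainder (a b : ℕ) (hab : Odd (a + b)) (θ φ : ℝ) :
    evalSeries θ φ (lapRemainder ⟨(a, b), hab⟩) = ρ ^ (a + 2 * b) *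
      (a * (a - 1) * (Real.cos θ ^ (a - 2) * (Real.sin θ ^ 2 * Real.cos (2 * φ)) ^ b)
        + 4 * b * (b - 1) * (Real.cos θ ^ a * (Real.sin θ ^ 2 * Real.cos (2 * φ)) ^ (b - 2)
          - Real.cos θ ^ (a + 2) * (Real.sin θ ^ 2 * Real.cos (2 * φ)) ^ (b - 2))) := by
  simp only [lapRemainder, map_add, map_sub, map_smul, smul_eq_mul]
  rw [mul_add]
  congr 1
  · rcases a with _ | _ | a
    · simp
    · simp
    · rw [evalSeries_monomialVec (by rw [Nat.odd_iff] at hab ⊢; omega),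
        show a + 1 + 1 - 2 = a from rfl]
      ring
  · rcases b with _ | _ | b
    · simp
    · simp
    · rw [evalSeries_monomialVec (by rw [Nat.odd_iff] at hab ⊢; omega),
        evalSeries_monomialVec (by rw [Nat.odd_iff] at hab ⊢; omega),
        show b + 1 + 1 - 2 = b from rfl]
      ring

lemma lapS_oddMonomial (p : OddPair) {θ : ℝ} (hθ : Real.sin θ ≠ 0) (φ : ℝ) :
    lapS (oddMonomial p) θ φ = -(p.degree * (p.degree + 1)) * oddMonomial p θ φ
      + evalSeries θ φ (lapRemainder p) := by
  obtain ⟨⟨a, b⟩, hab⟩ := p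
  refine (lapS_const_mul _ _ θ φ).trans ?_
  rw [lapS_cos_pow_mul_pow a b hθ, evalSeries_lapRemainder]
  simp only [oddMonomial, OddPair.degree]
  push_cast
  ring

/-- The inverse of the eigenvalue `6 - n (n + 1)` of `Δ + 6` in degree `n`, except on its kernel. -/
def parametrixCoeff (p : OddPair) : ℝ :=
  if 3 ≤ p.degree then -((p.degree : ℝ) ^ 2 + p.degree - 6)⁻¹ else 0

lemma abs_parametrixCoeff_mul_le (p : OddPair) :
    |parametrixCoeff p| * (p.degree : ℝ) ^ 2 ≤ 3 / 2 := by
  rw [parametrixCoeff]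
  split_ifs with h
  · have h' : (3 : ℝ) ≤ p.degree := mod_cast h
    have hpos : (0 : ℝ) < (p.degree : ℝ) ^ 2 + p.degree - 6 := by nlinarith
    rw [abs_neg, abs_of_pos (inv_pos.mpr hpos), inv_mul_le_iff₀ hpos]
    nlinarith
  · norm_num

lemma abs_parametrixCoeff_le_one (p : OddPair) : |parametrixCoeff p| ≤ 1 := by
  rw [parametrixCoeff]
  split_ifs with h
  · have h' : (3 : ℝ) ≤ p.degree := mod_cast h
    have hone : (1 : ℝ) ≤ (p.degree : ℝ) ^ 2 + p.degree - 6 := by nlinarith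
    rw [abs_neg, abs_of_pos (inv_pos.mpr (by positivity))]
    exact inv_le_one_of_one_le₀ hone
  · norm_num

/-- The approximate right inverse of `Δ + 6` that is diagonal in the monomial basis. -/
def parametrix : EllOne OddPair →L[ℝ] EllOne OddPair :=
  EllOne.lift (C := 1) (fun p => parametrixCoeff p • EllOne.basisVec p) fun p => by
    rw [norm_smul, EllOne.norm_basisVec, mul_one]
    exact abs_parametrixCoeff_le_one p

lemma norm_parametrixCoeff_smul_lapRemainder_le (p : OddPair) :
    ‖parametrixCoeff p • lapRemainder p‖ ≤ 1 / 2 := by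
  calc ‖parametrixCoeff p • lapRemainder p‖
      = |parametrixCoeff p| * ‖lapRemainder p‖ := norm_smul _ _
    _ ≤ |parametrixCoeff p| * (2 * ρ ^ 2 * (p.degree : ℝ) ^ 2) := by
        gcongr; exact norm_lapRemainder_le p
    _ = 2 * ρ ^ 2 * (|parametrixCoeff p| * (p.degree : ℝ) ^ 2) := by ring
    _ ≤ 2 * ρ ^ 2 * (3 / 2) := by gcongr; exact abs_parametrixCoeff_mul_le p
    _ ≤ 1 / 2 := by norm_num [monomialScale]

/-- The error of `parametrix`, coming from the lower order parts of the Laplacian. -/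
def parametrixError : EllOne OddPair →L[ℝ] EllOne OddPair :=
  EllOne.lift (fun p => parametrixCoeff p • lapRemainder p)
    norm_parametrixCoeff_smul_lapRemainder_le

lemma norm_parametrixError_le : ‖parametrixError‖ ≤ 1 / 2 :=
  EllOne.norm_lift_le (by norm_num) _

lemma isInvertible_one_add_parametrixError :
    ((1 : EllOne OddPair →L[ℝ] EllOne OddPair) + parametrixError).IsInvertible := by
  have hnorm : ‖-parametrixError‖ < 1 := by
    rw [norm_neg]
    exact norm_parametrixError_le.trans_lt (by norm_num)
  obtain ⟨u, hu⟩ := isUnit_one_sub_of_norm_lt_one hnorm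
  rw [sub_neg_eq_add] at hu
  exact ⟨ContinuousLinearEquiv.unitsEquiv ℝ _ u, hu⟩

lemma lapS_oddSeries_basisVec (p : OddPair) {θ : ℝ} (hθ : Real.sin θ ≠ 0) (φ : ℝ) :
    lapS (oddSeries (EllOne.basisVec p)) θ φ = -(p.degree * (p.degree + 1)) * oddMonomial p θ φ
      + evalSeries θ φ (lapRemainder p) := by
  rw [show oddSeries (EllOne.basisVec p) = oddMonomial p from
    funext₂ fun θ φ => evalSeries_basisVec θ φ p, lapS_oddMonomial p hθ]

lemma exists_clm_lapS_oddSeries (θ φ : ℝ) :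
    ∃ L : EllOne OddPair →L[ℝ] ℝ, ∀ u, L u = lapS (oddSeries u) θ φ :=
  exists_clm_lapS_tsum uniformlySmooth_oddMonomial θ φ

lemma lapS_oddSeries_parametrix (h : EllOne OddPair) {θ : ℝ} (hθ : Real.sin θ ≠ 0) (φ : ℝ) :
    lapS (oddSeries (parametrix h)) θ φ =
      -6 * evalSeries θ φ (parametrix h) + evalSeries θ φ (h + parametrixError h)
        - EllOne.coord .z h * oddMonomial .z θ φ
        - EllOne.coord .w h * oddMonomial .w θ φ := by
  obtain ⟨L, hL⟩ := exists_clm_lapS_oddSeries θ φ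
  suffices key : L ∘L parametrix = (-6 : ℝ) • (evalSeries θ φ ∘L parametrix) + evalSeries θ φ
      + evalSeries θ φ ∘L parametrixError - oddMonomial .z θ φ • EllOne.coord OddPair.z
      - oddMonomial .w θ φ • EllOne.coord OddPair.w by
    have := DFunLike.congr_fun key h
    simp only [ContinuousLinearMap.comp_apply, add_apply, sub_apply, smul_apply,
      smul_eq_mul] at this
    rw [← hL, this, map_add]
    ring
  refine EllOne.clm_ext fun p => ?_
  have hLp := (hL (EllOne.basisVec p)).trans (lapS_oddSeries_basisVec p hθ φ)
  simp only [ContinuousLinearMap.comp_apply, add_apply, sub_apply, smul_apply, smul_eq_mul,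
    parametrix, parametrixError, EllOne.lift_basisVec, map_smul, hLp, evalSeries_basisVec,
    EllOne.coord_basisVec]
  rcases lt_or_ge p.degree 3 with hlow | hhigh
  · have hcoeff : parametrixCoeff p = 0 := if_neg hlow.not_ge
    rw [hcoeff]
    rcases OddPair.eq_z_or_eq_w hlow with rfl | rfl <;> simp [OddPair.z, OddPair.w]
  · have hz : OddPair.z ≠ p := by rintro rfl; exact absurd hhigh (by decide)
    have hw : OddPair.w ≠ p := by rintro rfl; exact absurd hhigh (by decide)
    have hdeg : (3 : ℝ) ≤ p.degree := mod_cast hhigh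
    have hne : (p.degree : ℝ) ^ 2 + p.degree - 6 ≠ 0 := by nlinarith
    rw [parametrixCoeff, if_pos hhigh, if_neg hz, if_neg hw]
    linear_combination oddMonomial p θ φ * mul_inv_cancel₀ hne

/-! ### The semilinear equation -/

/-- The leading part `z + ε w` of the profile, an eigenfunction pair of the Laplacian. -/
def leadingProfile (ε : ℝ) : EllOne OddPair := monomialVec 1 0 + ε • monomialVec 0 1

/-- The profile with correction `h`, of relative size `δ`. -/
def profile (ε δ : ℝ) (h : EllOne OddPair) : EllOne OddPair :=
  leadingProfile ε + δ • parametrix h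

/-- The residual of the equation for the correction `h` in the pair `x = (δ, h)`. It is designed so
that at its zeros `Δψ + 6ψ - δψ³` is a combination of `ψ` and `z`, where `ψ` is the profile. -/
def profileResidual (ε : ℝ) (x : ℝ × EllOne OddPair) : EllOne OddPair :=
  x.2 + parametrixError x.2
    - tripleProduct (profile ε x.1 x.2) (profile ε x.1 x.2) (profile ε x.1 x.2)
    + (x.1 / ε * EllOne.coord .w x.2) • parametrix x.2

lemma contDiff_profileResidual (ε : ℝ) : ContDiff ℝ ∞ (profileResidual ε) := by
  unfold profileResidual profile
  fun_prop

lemma profileResidual_zero_left (ε : ℝ) (h : EllOne OddPair) :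
    profileResidual ε (0, h) = (1 + parametrixError) h
      - tripleProduct (leadingProfile ε) (leadingProfile ε) (leadingProfile ε) := by
  simp [profileResidual, profile]

lemma fderiv_profileResidual_comp_inr (ε : ℝ) (h₀ : EllOne OddPair) :
    fderiv ℝ (profileResidual ε) (0, h₀) ∘L .inr ℝ ℝ (EllOne OddPair) = 1 + parametrixError := by
  have hderiv : HasFDerivAt (fun h => profileResidual ε (0, h))
      (fderiv ℝ (profileResidual ε) (0, h₀) ∘L .inr ℝ ℝ (EllOne OddPair)) h₀ :=
    ((contDiff_profileResidual ε).differentiable (by simp) _).hasFDerivAt.comp h₀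
      ((hasFDerivAt_const (0 : ℝ) h₀).prodMk (hasFDerivAt_id h₀))
  simp only [profileResidual_zero_left] at hderiv
  exact hderiv.unique ((1 + parametrixError).hasFDerivAt.sub_const _)

lemma exists_tendsto_profileResidual_eq_zero (ε : ℝ) {h₀ : EllOne OddPair}
    (h₀_eq : profileResidual ε (0, h₀) = 0) :
    ∃ H : ℝ → EllOne OddPair, Tendsto H (𝓝 0) (𝓝 h₀) ∧
      ∀ᶠ δ in 𝓝 (0 : ℝ), profileResidual ε (δ, H δ) = 0 := by
  have hstrict : HasStrictFDerivAt (profileResidual ε) (fderiv ℝ (profileResidual ε) (0, h₀))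
      (0, h₀) := (contDiff_profileResidual ε).contDiffAt.hasStrictFDerivAt (by simp)
  have hinv : (fderiv ℝ (profileResidual ε) (0, h₀) ∘L .inr ℝ ℝ (EllOne OddPair)).IsInvertible := by
    rw [fderiv_profileResidual_comp_inr]
    exact isInvertible_one_add_parametrixError
  refine ⟨hstrict.implicitFunctionOfProdDomain hinv,
    hstrict.tendsto_implicitFunctionOfProdDomain hinv, ?_⟩
  simpa only [h₀_eq] using hstrict.eventually_apply_implicitFunctionOfProdDomain hinv

/-- The coefficient of `z` left over in the Laplacian of the profile. -/
def driftCoeff (ε δ : ℝ) (h : EllOne OddPair) : ℝ :=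
  4 - δ * EllOne.coord .z h + δ * (EllOne.coord .w h / ε)

lemma lapS_profile {ε δ : ℝ} (hε : ε ≠ 0) {h : EllOne OddPair}
    (h_eq : profileResidual ε (δ, h) = 0) {θ : ℝ} (hθ : Real.sin θ ≠ 0) (φ : ℝ) :
    lapS (oddSeries (profile ε δ h)) θ φ =
      -6 * oddSeries (profile ε δ h) θ φ
      + driftCoeff ε δ h * (ρ * Real.cos θ)
      + δ * oddSeries (profile ε δ h) θ φ ^ 3
      - δ * (EllOne.coord .w h / ε) * oddSeries (profile ε δ h) θ φ := by
  obtain ⟨L, hL⟩ := exists_clm_lapS_oddSeries θ φ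
  have hz : monomialVec 1 0 = EllOne.basisVec .z := monomialVec_of_odd (by decide)
  have hw : monomialVec 0 1 = EllOne.basisVec .w := monomialVec_of_odd (by decide)
  have hLz : L (monomialVec 1 0) = -2 * oddMonomial .z θ φ := by
    rw [hL, hz, lapS_oddSeries_basisVec _ hθ]
    norm_num [OddPair.degree, OddPair.z, lapRemainder]
  have hLw : L (monomialVec 0 1) = -6 * oddMonomial .w θ φ := by
    rw [hL, hw, lapS_oddSeries_basisVec _ hθ]
    norm_num [OddPair.degree, OddPair.w, lapRemainder]
  have hLh := (hL (parametrix h)).trans (lapS_oddSeries_parametrix h hθ φ)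
  have hψ : oddSeries (profile ε δ h) θ φ = oddMonomial .z θ φ + ε * oddMonomial .w θ φ
      + δ * evalSeries θ φ (parametrix h) := by
    simp only [oddSeries, profile, leadingProfile, map_add, map_smul, smul_eq_mul, hz, hw,
      evalSeries_basisVec]
  have hres : evalSeries θ φ (h + parametrixError h) - oddSeries (profile ε δ h) θ φ ^ 3
      + δ / ε * EllOne.coord .w h * evalSeries θ φ (parametrix h) = 0 := by
    have := congrArg (evalSeries θ φ) h_eq
    simp only [profileResidual, map_add, map_sub, map_smul, smul_eq_mul, map_zero,
      evalSeries_tripleProduct] at this ⊢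
    simp only [oddSeries]
    linear_combination this
  have hcos : oddMonomial .z θ φ = ρ * Real.cos θ := by
    simp [oddMonomial, OddPair.z, OddPair.degree]
  have hLψ : L (profile ε δ h) = -2 * oddMonomial .z θ φ - 6 * (ε * oddMonomial .w θ φ)
      + δ * L (parametrix h) := by
    simp only [profile, leadingProfile, map_add, map_smul, smul_eq_mul, hLz, hLw]
    ring
  rw [← hL, ← hcos, hLψ, hLh, driftCoeff]
  generalize oddSeries (profile ε δ h) θ φ = ψ at *
  subst hψ
  field_simp at hres ⊢
  linear_combination δ * hres

/-! ### The first correction -/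

/-- The coefficient of `z² w` in the first correction. -/
def correctionCoeff₂₁ (ε : ℝ) : ℝ := 3 * ε - 2 / 3 * ρ ^ 2 * ε ^ 3

/-- The correction at `δ = 0`: it solves `h + parametrixError h = (z + ε w)³`, and is found by
descending on the degree. -/
def firstCorrection (ε : ℝ) : EllOne OddPair :=
  ε ^ 3 • monomialVec 0 3 + (3 * ε ^ 2) • monomialVec 1 2
    + correctionCoeff₂₁ ε • monomialVec 2 1 + (1 - ρ ^ 2 * ε ^ 2) • monomialVec 3 0
    + (2 / 3 * ρ ^ 4 * ε ^ 3 + ρ ^ 2 / 7 * correctionCoeff₂₁ ε) • monomialVec 0 1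
    + (ρ ^ 4 * ε ^ 2 + ρ ^ 2 * (1 - ρ ^ 2 * ε ^ 2)) • monomialVec 1 0

lemma parametrixError_monomialVec {a b : ℕ} (h : Odd (a + b)) :
    parametrixError (monomialVec a b)
      = parametrixCoeff ⟨(a, b), h⟩ • lapRemainder ⟨(a, b), h⟩ := by
  rw [monomialVec_of_odd h, parametrixError, EllOne.lift_basisVec]

lemma parametrix_monomialVec {a b : ℕ} (h : Odd (a + b)) :
    parametrix (monomialVec a b) = parametrixCoeff ⟨(a, b), h⟩ • monomialVec a b := by
  rw [monomialVec_of_odd h, parametrix, EllOne.lift_basisVec]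

lemma tripleProduct_monomialVec {a b c d e f : ℕ} (hab : Odd (a + b)) (hcd : Odd (c + d))
    (hef : Odd (e + f)) :
    tripleProduct (monomialVec a b) (monomialVec c d) (monomialVec e f)
      = monomialVec (a + c + e) (b + d + f) := by
  rw [monomialVec_of_odd hab, monomialVec_of_odd hcd, monomialVec_of_odd hef,
    EllOne.ternaryProduct_basisVec, monomialVec_of_odd]
  rfl

lemma tripleProduct_leadingProfile (ε : ℝ) :
    tripleProduct (leadingProfile ε) (leadingProfile ε) (leadingProfile ε)
      = monomialVec 3 0 + (3 * ε) • monomialVec 2 1 + (3 * ε ^ 2) • monomialVec 1 2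
        + ε ^ 3 • monomialVec 0 3 := by
  have h (a b c d e f : ℕ) (hab : a + b = 1) (hcd : c + d = 1) (hef : e + f = 1) :=
    tripleProduct_monomialVec (a := a) (b := b) (c := c) (d := d) (e := e) (f := f)
      (by rw [hab]; decide) (by rw [hcd]; decide) (by rw [hef]; decide)
  simp only [leadingProfile, map_add, map_smul, add_apply, smul_apply, h]
  module

lemma profileResidual_zero_firstCorrection (ε : ℝ) :
    profileResidual ε (0, firstCorrection ε) = 0 := by
  have h₁₀ : parametrixError (monomialVec 1 0) = 0 := by
    rw [parametrixError_monomialVec (by decide)]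
    simp [parametrixCoeff, OddPair.degree]
  have h₀₁ : parametrixError (monomialVec 0 1) = 0 := by
    rw [parametrixError_monomialVec (by decide)]
    simp [parametrixCoeff, OddPair.degree]
  have h₃₀ : parametrixError (monomialVec 3 0) = -ρ ^ 2 • monomialVec 1 0 := by
    rw [parametrixError_monomialVec (by decide)]
    simp only [parametrixCoeff, lapRemainder, OddPair.degree, Nat.reduceSub]
    match_scalars <;> norm_num
    ring
  have h₂₁ : parametrixError (monomialVec 2 1) = -(ρ ^ 2 / 7) • monomialVec 0 1 := by
    rw [parametrixError_monomialVec (by decide)]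
    simp only [parametrixCoeff, lapRemainder, OddPair.degree, Nat.reduceSub]
    match_scalars <;> norm_num
    ring
  have h₁₂ : parametrixError (monomialVec 1 2)
      = -(1 / 3 : ℝ) • (ρ ^ 4 • monomialVec 1 0 - ρ ^ 2 • monomialVec 3 0) := by
    rw [parametrixError_monomialVec (by decide)]
    simp only [parametrixCoeff, lapRemainder, OddPair.degree, Nat.reduceSub]
    match_scalars <;> norm_num <;> ring
  have h₀₃ : parametrixError (monomialVec 0 3)
      = -(2 / 3 : ℝ) • (ρ ^ 4 • monomialVec 0 1 - ρ ^ 2 • monomialVec 2 1) := by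
    rw [parametrixError_monomialVec (by decide)]
    simp only [parametrixCoeff, lapRemainder, OddPair.degree, Nat.reduceSub]
    match_scalars <;> norm_num <;> ring
  rw [profileResidual_zero_left, tripleProduct_leadingProfile]
  simp only [firstCorrection, map_add, map_smul, add_apply, one_apply_eq_self, h₁₀, h₀₁,
    h₃₀, h₂₁, h₁₂, h₀₃, correctionCoeff₂₁]
  module

/-! ### Spherical harmonics -/

/-- The `k`-th derivative of `(X ^ 2 - 1) ^ n`, which by Rodrigues' formula carries the polynomial
part of `Y_n^m` when `k = n + |m|`. -/
def rodriguesDeriv (n k : ℕ) : ℝ[X] := derivative^[k] ((X ^ 2 - 1) ^ n)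

lemma derivative_rodriguesDeriv (n k : ℕ) :
    derivative (rodriguesDeriv n k) = rodriguesDeriv n (k + 1) :=
  (Function.iterate_succ_apply' ..).symm

lemma iteratedDeriv_polynomial_eval (p : ℝ[X]) (k : ℕ) :
    iteratedDeriv k (fun x => p.eval x) = fun x => (derivative^[k] p).eval x := by
  induction k with
  | zero => simp
  | succ k ih =>
    ext x
    rw [iteratedDeriv_succ, ih, Function.iterate_succ_apply', Polynomial.deriv]

lemma legP_eq_rodriguesDeriv (n : ℕ) :
    legP n = fun s => 1 / (2 ^ n * (n.factorial : ℝ)) * (rodriguesDeriv n n).eval s := by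
  ext s
  rw [legP, rodriguesDeriv, ← congrFun (iteratedDeriv_polynomial_eval _ n) s]
  simp

lemma iteratedDeriv_legP (n m : ℕ) :
    iteratedDeriv m (legP n)
      = fun s => 1 / (2 ^ n * (n.factorial : ℝ)) * (rodriguesDeriv n (n + m)).eval s := by
  have hleg : legP n
      = fun s => (C (1 / (2 ^ n * (n.factorial : ℝ))) * rodriguesDeriv n n).eval s := by
    simp only [legP_eq_rodriguesDeriv, eval_mul, eval_C]
  have hderiv : derivative^[m] (rodriguesDeriv n n) = rodriguesDeriv n (n + m) := by
    rw [rodriguesDeriv, ← Function.iterate_add_apply, add_comm m n, ← rodriguesDeriv]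
  rw [hleg, iteratedDeriv_polynomial_eval]
  simp only [iterate_derivative_C_mul, hderiv, eval_mul, eval_C]

/-- The longitudinal factor of `Y_n^m`: `cos (|m| φ)` for `m ≥ 0` and `sin (|m| φ)` for `m < 0`,
with the sine written as a shifted cosine so that both cases are covered by one formula. -/
def azimuthal (m : ℤ) (φ : ℝ) : ℝ :=
  Real.cos (m.natAbs * φ + if m < 0 then -(Real.pi / 2) else 0)

lemma abs_azimuthal_le_one (m : ℤ) (φ : ℝ) : |azimuthal m φ| ≤ 1 := Real.abs_cos_le_one _

/-- The constant factor of `Y_n^m`, including the one of Rodrigues' formula. -/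
def harmonicConst (n : ℕ) (m : ℤ) : ℝ :=
  (if m = 0 then 1 else Real.sqrt 2)
    * Real.sqrt ((2 * n + 1) / (4 * Real.pi)
      * ((n - m.natAbs).factorial / (n + m.natAbs).factorial))
    * (1 / (2 ^ n * n.factorial))

lemma harmonicConst_pos (n : ℕ) (m : ℤ) : 0 < harmonicConst n m := by
  unfold harmonicConst
  split_ifs <;> positivity

lemma Ynm_eq (n : ℕ) (m : ℤ) (θ φ : ℝ) :
    Ynm n m θ φ = harmonicConst n m
      * ((Real.sin θ ^ 2) ^ ((m.natAbs : ℝ) / 2)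
        * (rodriguesDeriv n (n + m.natAbs)).eval (Real.cos θ)) * azimuthal m φ := by
  have neg_one_sq_pow : (-1 : ℝ) ^ m.natAbs * (-1) ^ m.natAbs = 1 := by
    rw [← mul_pow, neg_one_mul, neg_neg, one_pow]
  rw [Ynm, assocLegP, iteratedDeriv_legP, ← Real.sin_sq, harmonicConst, azimuthal]
  rcases lt_trichotomy m 0 with hm | rfl | hm
  · rw [if_neg hm.ne, if_neg hm.not_gt, if_neg hm.ne, if_pos hm, ← sub_eq_add_neg,
      Real.cos_sub_pi_div_two]
    linear_combination (Real.sqrt 2 * Real.sqrt ((2 * n + 1) / (4 * Real.pi)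
      * ((n - m.natAbs).factorial / (n + m.natAbs).factorial))
      * (Real.sin θ ^ 2) ^ ((m.natAbs : ℝ) / 2) * (1 / (2 ^ n * n.factorial)
      * (rodriguesDeriv n (n + m.natAbs)).eval (Real.cos θ)) * Real.sin (m.natAbs * φ))
      * neg_one_sq_pow
  · have hn : (n.factorial : ℝ) ≠ 0 := by positivity
    simp only [legP_eq_rodriguesDeriv, if_true, Int.natAbs_zero, Nat.sub_zero,
      lt_irrefl, if_false, Nat.cast_zero, zero_mul, zero_div, Real.rpow_zero,
      add_zero, Real.cos_zero]
    rw [div_self hn]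
    simp only [mul_one, one_mul, mul_assoc]
  · rw [if_neg hm.ne', if_pos hm, if_neg hm.ne', if_neg hm.not_gt, add_zero]
    linear_combination (Real.sqrt 2 * Real.sqrt ((2 * n + 1) / (4 * Real.pi)
      * ((n - m.natAbs).factorial / (n + m.natAbs).factorial))
      * (Real.sin θ ^ 2) ^ ((m.natAbs : ℝ) / 2) * (1 / (2 ^ n * n.factorial)
      * (rodriguesDeriv n (n + m.natAbs)).eval (Real.cos θ)) * Real.cos (m.natAbs * φ))
      * neg_one_sq_pow

lemma continuous_Ynm (n : ℕ) (m : ℤ) : Continuous (Function.uncurry (Ynm n m)) := by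
  have hrpow : Continuous fun x : ℝ × ℝ => (Real.sin x.1 ^ 2) ^ ((m.natAbs : ℝ) / 2) :=
    Continuous.rpow_const (by fun_prop) fun _ => .inr (by positivity)
  have huncurry : Function.uncurry (Ynm n m) = fun x : ℝ × ℝ => harmonicConst n m
      * ((Real.sin x.1 ^ 2) ^ ((m.natAbs : ℝ) / 2)
        * (rodriguesDeriv n (n + m.natAbs)).eval (Real.cos x.1)) * azimuthal m x.2 :=
    funext fun x => Ynm_eq n m x.1 x.2
  rw [huncurry]
  unfold azimuthal
  fun_prop

lemma descFactorial_two_mul_le {n j : ℕ} (hj : j ≤ n) (k : ℕ) :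
    (2 * j).descFactorial k ≤ 4 ^ n * k.factorial := by
  rw [Nat.descFactorial_eq_factorial_mul_choose, mul_comm]
  gcongr
  calc (2 * j).choose k ≤ 2 ^ (2 * j) := Nat.choose_le_two_pow _ _
    _ = 4 ^ j := pow_mul 2 2 j
    _ ≤ 4 ^ n := Nat.pow_le_pow_right (by norm_num) hj

lemma abs_eval_rodriguesDeriv_le (n k : ℕ) {x : ℝ} (hx : |x| ≤ 1) :
    |(rodriguesDeriv n k).eval x| ≤ 8 ^ n * k.factorial := by
  have expand : ((X : ℝ[X]) ^ 2 - 1) ^ n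
      = ∑ j ∈ Finset.range (n + 1), C ((-1 : ℝ) ^ (n - j) * n.choose j) * X ^ (2 * j) := by
    rw [sub_eq_add_neg, add_pow]
    refine Finset.sum_congr rfl fun j _ => ?_
    simp only [map_mul, map_pow, map_neg, map_one, map_natCast, pow_mul]
    ring
  have term_le (j) (hj : j ∈ Finset.range (n + 1)) :
      |(derivative^[k] (C ((-1 : ℝ) ^ (n - j) * n.choose j) * X ^ (2 * j))).eval x|
        ≤ n.choose j * (4 ^ n * k.factorial) := by
    have hdesc : ((2 * j).descFactorial k : ℝ) ≤ 4 ^ n * k.factorial :=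
      mod_cast descFactorial_two_mul_le (Finset.mem_range_succ_iff.mp hj) k
    rw [iterate_derivative_C_mul, iterate_derivative_X_pow_eq_C_mul]
    simp only [eval_mul, eval_C, eval_pow, eval_X, abs_mul, abs_pow, abs_neg, abs_one, one_pow,
      one_mul, Nat.abs_cast]
    refine mul_le_mul_of_nonneg_left ?_ (by positivity)
    exact (mul_le_of_le_one_right (by positivity) (pow_le_one₀ (abs_nonneg x) hx)).trans hdesc
  have sum_choose : ∑ j ∈ Finset.range (n + 1), (n.choose j : ℝ) = 2 ^ n :=
    mod_cast Nat.sum_range_choose n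
  calc |(rodriguesDeriv n k).eval x|
      ≤ ∑ j ∈ Finset.range (n + 1), n.choose j * (4 ^ n * (k.factorial : ℝ)) := by
        rw [rodriguesDeriv, expand, iterate_derivative_sum, eval_finsetSum]
        exact (Finset.abs_sum_le_sum_abs _ _).trans (Finset.sum_le_sum term_le)
    _ = 8 ^ n * k.factorial := by
        rw [← Finset.sum_mul, sum_choose, ← mul_assoc, ← mul_pow]
        norm_num

lemma factorial_sub_mul_factorial_add_le {n k : ℕ} (hk : k ≤ n) :
    (n - k).factorial * (n + k).factorial ≤ 4 ^ n * n.factorial ^ 2 := by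
  have hsum : n - k + (n + k) = 2 * n := by omega
  calc (n - k).factorial * (n + k).factorial ≤ (2 * n).factorial := by
        rw [← hsum]
        exact Nat.le_of_dvd (Nat.factorial_pos _) (Nat.factorial_mul_factorial_dvd_factorial_add ..)
    _ = (2 * n).choose n * n.factorial ^ 2 := by
        rw [← Nat.choose_mul_factorial_mul_factorial (show n ≤ 2 * n by omega),
          show 2 * n - n = n by omega, mul_assoc, sq]
    _ ≤ 4 ^ n * n.factorial ^ 2 := by
        gcongr
        exact (Nat.choose_le_two_pow _ _).trans_eq (pow_mul 2 2 n)

lemma two_mul_add_one_le_four_pow (n : ℕ) : 2 * n + 1 ≤ 4 ^ n := by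
  induction n with
  | zero => simp
  | succ n ih => rw [pow_succ]; omega

lemma harmonicConst_sq_le (n : ℕ) (m : ℤ) :
    harmonicConst n m ^ 2
      ≤ (2 * n + 1) * ((n - m.natAbs).factorial / (n + m.natAbs).factorial)
        * (1 / (2 ^ n * n.factorial)) ^ 2 := by
  have hprefactor : (if m = 0 then 1 else Real.sqrt 2 : ℝ) ^ 2 ≤ 2 := by
    split_ifs <;> norm_num
  have hpi : 2 * ((2 * n + 1) / (4 * Real.pi)) ≤ 2 * (n : ℝ) + 1 := by
    rw [mul_div_assoc', div_le_iff₀ (by positivity)]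
    nlinarith [Real.pi_gt_three, (Nat.cast_nonneg n : (0 : ℝ) ≤ n)]
  rw [harmonicConst, mul_pow, mul_pow, Real.sq_sqrt (by positivity), ← mul_assoc]
  gcongr
  exact (mul_le_mul_of_nonneg_right hprefactor (by positivity)).trans hpi

lemma harmonicConst_mul_le {n : ℕ} {m : ℤ} (hm : m.natAbs ≤ n) :
    harmonicConst n m * (8 ^ n * (n + m.natAbs).factorial) ≤ 16 ^ n := by
  have hfact : ((n - m.natAbs).factorial * (n + m.natAbs).factorial : ℝ)
      ≤ 4 ^ n * n.factorial ^ 2 := mod_cast factorial_sub_mul_factorial_add_le hm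
  have hlin : 2 * (n : ℝ) + 1 ≤ 4 ^ n := mod_cast two_mul_add_one_le_four_pow n
  refine le_of_sq_le_sq ?_ (by positivity)
  calc (harmonicConst n m * (8 ^ n * (n + m.natAbs).factorial)) ^ 2
      ≤ (2 * (n : ℝ) + 1) * ((n - m.natAbs).factorial / (n + m.natAbs).factorial)
          * (1 / (2 ^ n * n.factorial)) ^ 2 * (8 ^ n * (n + m.natAbs).factorial) ^ 2 := by
        rw [mul_pow]
        gcongr
        exact harmonicConst_sq_le n m
    _ = (2 * (n : ℝ) + 1) * (8 ^ n / 2 ^ n) ^ 2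
          * ((n - m.natAbs).factorial * (n + m.natAbs).factorial / n.factorial ^ 2) := by
        field_simp
    _ ≤ 4 ^ n * (8 ^ n / 2 ^ n : ℝ) ^ 2 * 4 ^ n := by
        gcongr
        exact (div_le_iff₀ (by positivity)).mpr hfact
    _ = (16 ^ n) ^ 2 := by
        rw [← div_pow, ← pow_mul, mul_comm n 2, pow_mul, ← mul_pow, ← mul_pow, ← pow_mul,
          mul_comm n 2, pow_mul]
        norm_num

lemma abs_Ynm_le {n : ℕ} {m : ℤ} (hm : m.natAbs ≤ n) (θ φ : ℝ) : |Ynm n m θ φ| ≤ 16 ^ n := by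
  have hsin : (Real.sin θ ^ 2) ^ ((m.natAbs : ℝ) / 2) ≤ 1 :=
    Real.rpow_le_one (by positivity) (Real.sin_sq_le_one θ) (by positivity)
  have hpoly := abs_eval_rodriguesDeriv_le n (n + m.natAbs) (Real.abs_cos_le_one θ)
  calc |Ynm n m θ φ|
      = harmonicConst n m * ((Real.sin θ ^ 2) ^ ((m.natAbs : ℝ) / 2)
          * |(rodriguesDeriv n (n + m.natAbs)).eval (Real.cos θ)|) * |azimuthal m φ| := by
        rw [Ynm_eq, abs_mul, abs_mul, abs_mul, abs_of_pos (harmonicConst_pos n m),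
          abs_of_nonneg (by positivity : 0 ≤ (Real.sin θ ^ 2) ^ ((m.natAbs : ℝ) / 2))]
    _ ≤ harmonicConst n m * (1 * (8 ^ n * (n + m.natAbs).factorial)) * 1 := by
        have := (harmonicConst_pos n m).le
        have := abs_azimuthal_le_one m φ
        gcongr
    _ = harmonicConst n m * (8 ^ n * (n + m.natAbs).factorial) := by rw [one_mul, mul_one]
    _ ≤ 16 ^ n := harmonicConst_mul_le hm

/-! ### Orthogonality relations -/

lemma integral_cos_int_mul_add {m : ℤ} (hm : m ≠ 0) (α : ℝ) :
    ∫ φ in (0 : ℝ)..(2 * Real.pi), Real.cos (m * φ + α) = 0 := by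
  have hm' : (m : ℝ) ≠ 0 := mod_cast hm
  rw [intervalIntegral.integral_comp_mul_add Real.cos hm', integral_cos, mul_zero, zero_add,
    add_comm, Real.sin_add_int_mul_two_pi, sub_self, smul_zero]

lemma integral_cos_two_mul_pow_mul_cos (b : ℕ) (α : ℝ) {m : ℤ} (hm : Odd m ∨ 2 * (b : ℤ) < m) :
    ∫ φ in (0 : ℝ)..(2 * Real.pi), Real.cos (2 * φ) ^ b * Real.cos (m * φ + α) = 0 := by
  induction b generalizing m with
  | zero =>
    have hm₀ : m ≠ 0 := by
      rintro rfl
      simp at hm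
    simpa using integral_cos_int_mul_add hm₀ α
  | succ b ih =>
    have product_to_sum (φ : ℝ) : Real.cos (2 * φ) ^ (b + 1) * Real.cos (m * φ + α)
        = 1 / 2 * (Real.cos (2 * φ) ^ b * Real.cos ((m + 2 : ℤ) * φ + α)
          + Real.cos (2 * φ) ^ b * Real.cos ((m - 2 : ℤ) * φ + α)) := by
      push_cast
      rw [show ((m : ℝ) + 2) * φ + α = m * φ + α + 2 * φ by ring,
        show ((m : ℝ) - 2) * φ + α = m * φ + α - 2 * φ by ring, Real.cos_add _ (2 * φ),
        Real.cos_sub _ (2 * φ)]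
      ring
    have hadd := ih (m := m + 2) <| hm.imp (·.add_even even_two) fun h => by push_cast at h; omega
    have hsub := ih (m := m - 2) <| hm.imp (·.sub_even even_two) fun h => by push_cast at h; omega
    simp only [product_to_sum]
    rw [intervalIntegral.integral_const_mul, intervalIntegral.integral_add
      (Continuous.intervalIntegrable (by fun_prop) _ _)
      (Continuous.intervalIntegrable (by fun_prop) _ _), hadd, hsub, add_zero, mul_zero]

lemma integral_cos_two_mul_pow_mul_azimuthal {b : ℕ} {m : ℤ}
    (hm : Odd m.natAbs ∨ 2 * b < m.natAbs) :
    ∫ φ in (0 : ℝ)..(2 * Real.pi), Real.cos (2 * φ) ^ b * azimuthal m φ = 0 :=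
  integral_cos_two_mul_pow_mul_cos (m := m.natAbs) b _ (mod_cast hm)

lemma integral_azimuthal_mul_azimuthal {m m' : ℤ} (hm : m ≠ m') :
    ∫ φ in (0 : ℝ)..(2 * Real.pi), azimuthal m φ * azimuthal m' φ = 0 := by
  unfold azimuthal
  set α : ℝ := if m < 0 then -(Real.pi / 2) else 0 with hα
  set β : ℝ := if m' < 0 then -(Real.pi / 2) else 0 with hβ
  have product_to_sum (φ : ℝ) : Real.cos (m.natAbs * φ + α) * Real.cos (m'.natAbs * φ + β)
      = 1 / 2 * (Real.cos ((m.natAbs - m'.natAbs : ℤ) * φ + (α - β))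
        + Real.cos ((m.natAbs + m'.natAbs : ℤ) * φ + (α + β))) := by
    rw [← mul_right_inj' (two_ne_zero' ℝ), ← mul_assoc, Real.two_mul_cos_mul_cos]
    simp only [Int.cast_sub, Int.cast_add, Int.cast_natCast]
    ring_nf
  have hdiff : ∫ φ in (0 : ℝ)..(2 * Real.pi),
      Real.cos ((m.natAbs - m'.natAbs : ℤ) * φ + (α - β)) = 0 := by
    rcases eq_or_ne m.natAbs m'.natAbs with habs | habs
    · have hcos : Real.cos (α - β) = 0 := by
        rw [hα, hβ]
        split_ifs
        · omega
        · simp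
        · simp
        · omega
      simp [habs, hcos]
    · exact integral_cos_int_mul_add (by omega) _
  simp only [product_to_sum]
  rw [intervalIntegral.integral_const_mul, intervalIntegral.integral_add
    (Continuous.intervalIntegrable (by fun_prop) _ _)
    (Continuous.intervalIntegrable (by fun_prop) _ _), hdiff,
    integral_cos_int_mul_add (by omega), add_zero, mul_zero]

lemma integral_eval_cos_mul_sin (p : ℝ[X]) :
    ∫ θ in (0 : ℝ)..Real.pi, p.eval (Real.cos θ) * Real.sin θ = ∫ x in (-1 : ℝ)..1, p.eval x := by
  have hsubst := intervalIntegral.integral_comp_mul_deriv (a := 0) (b := Real.pi)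
    (fun θ _ => Real.hasDerivAt_cos θ) Real.continuous_sin.neg.continuousOn p.continuous
  rw [Real.cos_zero, Real.cos_pi, intervalIntegral.integral_symm (-1) 1] at hsubst
  rw [← neg_inj, ← hsubst, ← intervalIntegral.integral_neg]
  simp

lemma integral_eval_mul_derivative {A B : ℝ[X]} (h_one : (A * B).eval 1 = 0)
    (h_neg_one : (A * B).eval (-1) = 0) :
    ∫ x in (-1 : ℝ)..1, (A * derivative B).eval x
      = -∫ x in (-1 : ℝ)..1, (derivative A * B).eval x := by
  have hparts := intervalIntegral.integral_mul_deriv_eq_deriv_mul (a := -1) (b := 1)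
    (fun x _ => A.hasDerivAt x) (fun x _ => B.hasDerivAt x)
    ((derivative A).continuous.intervalIntegrable _ _)
    ((derivative B).continuous.intervalIntegrable _ _)
  simpa only [← eval_mul, h_one, h_neg_one, sub_zero, zero_sub] using hparts

lemma eval_eq_zero_of_X_sq_sub_one_pow_dvd {p : ℝ[X]} {k : ℕ} (hk : k ≠ 0)
    (hp : (X ^ 2 - 1) ^ k ∣ p) : p.eval 1 = 0 ∧ p.eval (-1) = 0 := by
  obtain ⟨q, rfl⟩ := hp
  simp [hk]

lemma integral_mul_rodriguesDeriv_eq_iterate {A : ℝ[X]} {n k : ℕ} (hA : (X ^ 2 - 1) ^ k ∣ A)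
    {i : ℕ} (hi : i ≤ n + k) :
    ∫ x in (-1 : ℝ)..1, (A * rodriguesDeriv n (n + k)).eval x
      = (-1) ^ i * ∫ x in (-1 : ℝ)..1,
          (derivative^[i] A * rodriguesDeriv n (n + k - i)).eval x := by
  induction i with
  | zero => simp
  | succ i ih =>
    obtain ⟨j, hj⟩ : ∃ j, n + k - i = j + 1 := ⟨n + k - i - 1, by omega⟩
    have boundary : (derivative^[i] A * rodriguesDeriv n j).eval 1 = 0
        ∧ (derivative^[i] A * rodriguesDeriv n j).eval (-1) = 0 := by
      by_cases hjn : j < n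
      · have hdvd : (X ^ 2 - 1) ^ (n - j) ∣ rodriguesDeriv n j :=
          pow_sub_dvd_iterate_derivative_of_pow_dvd j dvd_rfl
        exact eval_eq_zero_of_X_sq_sub_one_pow_dvd (by omega) (hdvd.mul_left _)
      · have hdvd : (X ^ 2 - 1) ^ (k - i) ∣ derivative^[i] A :=
          pow_sub_dvd_iterate_derivative_of_pow_dvd i hA
        exact eval_eq_zero_of_X_sq_sub_one_pow_dvd (by omega) (hdvd.mul_right _)
    rw [ih (by omega), hj, ← derivative_rodriguesDeriv,
      integral_eval_mul_derivative boundary.1 boundary.2, Function.iterate_succ_apply', pow_succ,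
      show n + k - (i + 1) = j by omega, mul_neg, mul_neg_one, neg_mul]

lemma integral_mul_rodriguesDeriv_eq_zero {A : ℝ[X]} {n k : ℕ} (hA : (X ^ 2 - 1) ^ k ∣ A)
    (hdeg : A.natDegree < n + k) :
    ∫ x in (-1 : ℝ)..1, (A * rodriguesDeriv n (n + k)).eval x = 0 := by
  rw [integral_mul_rodriguesDeriv_eq_iterate hA le_rfl, iterate_derivative_eq_zero hdeg]
  simp

lemma coeff_separated (A g : ℝ → ℝ) (n : ℕ) (m : ℤ) :
    coeff (fun θ φ => A θ * g φ) n m = harmonicConst n m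
      * (∫ θ in (0 : ℝ)..Real.pi, A θ * ((Real.sin θ ^ 2) ^ ((m.natAbs : ℝ) / 2)
          * (rodriguesDeriv n (n + m.natAbs)).eval (Real.cos θ)) * Real.sin θ)
      * ∫ φ in (0 : ℝ)..(2 * Real.pi), g φ * azimuthal m φ := by
  unfold coeff sInner
  simp only [Ynm_eq]
  rw [← intervalIntegral.integral_const_mul]
  refine intervalIntegral.integral_congr fun φ _ => ?_
  rw [mul_right_comm, ← mul_assoc, ← intervalIntegral.integral_const_mul]
  exact intervalIntegral.integral_congr fun θ _ => by ring

lemma coeff_separated_of_polynomial {A : ℝ → ℝ} (g : ℝ → ℝ) (n : ℕ) {m : ℤ} {q : ℝ[X]}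
    (hq : ∀ θ, A θ * (Real.sin θ ^ 2) ^ ((m.natAbs : ℝ) / 2) = q.eval (Real.cos θ)) :
    coeff (fun θ φ => A θ * g φ) n m = harmonicConst n m
      * (∫ x in (-1 : ℝ)..1, (q * rodriguesDeriv n (n + m.natAbs)).eval x)
      * ∫ φ in (0 : ℝ)..(2 * Real.pi), g φ * azimuthal m φ := by
  simp only [coeff_separated, ← mul_assoc, hq, ← eval_mul, integral_eval_cos_mul_sin]

lemma coeff_Ynm_eq_zero {n n' : ℕ} (hn : n < n') {m : ℤ} (hm : m.natAbs ≤ n) (m' : ℤ) :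
    coeff (Ynm n m) n' m' = 0 := by
  rw [funext₂ (Ynm_eq n m)]
  rcases ne_or_eq m m' with hmm' | rfl
  · rw [coeff_separated, integral_azimuthal_mul_azimuthal hmm', mul_zero]
  · set R := rodriguesDeriv n (n + m.natAbs) with hR
    have hq (θ : ℝ) : harmonicConst n m * ((Real.sin θ ^ 2) ^ ((m.natAbs : ℝ) / 2)
        * R.eval (Real.cos θ)) * (Real.sin θ ^ 2) ^ ((m.natAbs : ℝ) / 2)
        = (C (harmonicConst n m) * (1 - X ^ 2) ^ m.natAbs * R).eval (Real.cos θ) := by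
      have hpow : (Real.sin θ ^ 2) ^ ((m.natAbs : ℝ) / 2) * (Real.sin θ ^ 2) ^ ((m.natAbs : ℝ) / 2)
          = (Real.sin θ ^ 2) ^ m.natAbs := by
        rw [← Real.rpow_add_of_nonneg (by positivity) (by positivity) (by positivity), add_halves,
          Real.rpow_natCast]
      simp only [eval_mul, eval_C, eval_pow, eval_sub, eval_one, eval_X, ← Real.sin_sq, ← hpow]
      ring
    have hdvd : (X ^ 2 - 1) ^ m.natAbs ∣ C (harmonicConst n m) * (1 - X ^ 2) ^ m.natAbs * R := by
      rw [← neg_sub (X ^ 2 : ℝ[X]), neg_pow (X ^ 2 - 1 : ℝ[X])]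
      exact ((dvd_mul_left _ _).mul_left _).mul_right _
    have hRdeg : R.natDegree ≤ n - m.natAbs := by
      have hpow : (((X : ℝ[X]) ^ 2 - 1) ^ n).natDegree ≤ n * 2 := by compute_degree
      have hiter := natDegree_iterate_derivative (((X : ℝ[X]) ^ 2 - 1) ^ n) (n + m.natAbs)
      rw [hR, rodriguesDeriv]
      omega
    have hdeg : (C (harmonicConst n m) * (1 - X ^ 2) ^ m.natAbs * R).natDegree < n' + m.natAbs := by
      have hfactor : (C (harmonicConst n m) * ((1 : ℝ[X]) - X ^ 2) ^ m.natAbs).natDegree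
          ≤ m.natAbs * 2 := by compute_degree
      have hmul := natDegree_mul_le (p := C (harmonicConst n m) * ((1 : ℝ[X]) - X ^ 2) ^ m.natAbs)
        (q := R)
      omega
    rw [coeff_separated_of_polynomial _ _ hq, integral_mul_rodriguesDeriv_eq_zero hdvd hdeg,
      mul_zero, zero_mul]

lemma coeff_const_mul (c : ℝ) (u : SphereFun) (n : ℕ) (m : ℤ) :
    coeff (fun θ φ => c * u θ φ) n m = c * coeff u n m := by
  unfold coeff sInner
  simp only [mul_assoc, intervalIntegral.integral_const_mul]

lemma coeff_cos_pow_mul_pow (a b n : ℕ) {m : ℤ} {j : ℕ} (hj : m.natAbs = 2 * j) :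
    coeff (fun θ φ => Real.cos θ ^ a * (Real.sin θ ^ 2 * Real.cos (2 * φ)) ^ b) n m
      = harmonicConst n m
        * (∫ x in (-1 : ℝ)..1,
          (X ^ a * (1 - X ^ 2) ^ (b + j) * rodriguesDeriv n (n + 2 * j)).eval x)
        * ∫ φ in (0 : ℝ)..(2 * Real.pi), Real.cos (2 * φ) ^ b * azimuthal m φ := by
  have hq (θ : ℝ) : Real.cos θ ^ a * (Real.sin θ ^ 2) ^ b * (Real.sin θ ^ 2) ^ ((m.natAbs : ℝ) / 2)
      = (X ^ a * (1 - X ^ 2) ^ (b + j) : ℝ[X]).eval (Real.cos θ) := by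
    rw [hj, Nat.cast_mul, Nat.cast_ofNat, mul_div_cancel_left₀ _ two_ne_zero, Real.rpow_natCast]
    simp only [eval_mul, eval_pow, eval_sub, eval_one, eval_X, ← Real.sin_sq, pow_add, mul_assoc]
  rw [← hj, ← coeff_separated_of_polynomial _ n hq]
  simp only [mul_pow, mul_assoc]

lemma coeff_oddMonomial_eq_zero {p : OddPair} {n : ℕ} (hp : p.degree < n) (m : ℤ) :
    coeff (oddMonomial p) n m = 0 := by
  unfold oddMonomial
  rw [coeff_const_mul]
  by_cases hm : Odd m.natAbs ∨ 2 * p.1.2 < m.natAbs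
  · simp only [mul_pow, ← mul_assoc]
    rw [coeff_separated, integral_cos_two_mul_pow_mul_azimuthal hm, mul_zero, mul_zero]
  · obtain ⟨heven, hle⟩ := not_or.mp hm
    obtain ⟨j, hj⟩ := even_iff_exists_two_mul.mp (Nat.not_odd_iff_even.mp heven)
    have hdvd : ((X : ℝ[X]) ^ 2 - 1) ^ (2 * j) ∣ X ^ p.1.1 * (1 - X ^ 2) ^ (p.1.2 + j) := by
      rw [← neg_sub (X ^ 2 : ℝ[X]), neg_pow (X ^ 2 - 1 : ℝ[X])]
      exact ((pow_dvd_pow _ (by omega)).mul_left _).mul_left _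
    have hdeg : ((X : ℝ[X]) ^ p.1.1 * (1 - X ^ 2) ^ (p.1.2 + j)).natDegree < n + 2 * j := by
      have hle : ((X : ℝ[X]) ^ p.1.1 * (1 - X ^ 2) ^ (p.1.2 + j)).natDegree
          ≤ p.1.1 + (p.1.2 + j) * 2 := by compute_degree
      rw [OddPair.degree] at hp
      omega
    rw [coeff_cos_pow_mul_pow _ _ _ hj, integral_mul_rodriguesDeriv_eq_zero hdvd hdeg]
    simp

lemma integral_cos_two_mul_pow_add_two (k : ℕ) :
    ∫ φ in (0 : ℝ)..(2 * Real.pi), Real.cos (2 * φ) ^ (k + 2)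
      = (k + 1) / (k + 2) * ∫ φ in (0 : ℝ)..(2 * Real.pi), Real.cos (2 * φ) ^ k := by
  have hsin : Real.sin (2 * (2 * Real.pi)) = 0 := by
    rw [← zero_add (2 * (2 * Real.pi)), ← Nat.cast_ofNat (R := ℝ) (n := 2)]
    simpa using Real.sin_add_nat_mul_two_pi 0 2
  rw [intervalIntegral.integral_comp_mul_left (fun x => Real.cos x ^ (k + 2)) two_ne_zero,
    intervalIntegral.integral_comp_mul_left (fun x => Real.cos x ^ k) two_ne_zero, integral_cos_pow,
    hsin]
  simp only [mul_zero, Real.sin_zero, smul_eq_mul]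
  ring

lemma rodriguesDeriv_four_six : rodriguesDeriv 4 6 = 20160 * X ^ 2 - 2880 := by
  have expand : ((X : ℝ[X]) ^ 2 - 1) ^ 4 = X ^ 8 - 4 * X ^ 6 + 6 * X ^ 4 - 4 * X ^ 2 + 1 := by
    ring
  simp only [rodriguesDeriv, expand, Function.iterate_succ_apply', Function.iterate_zero_apply,
    derivative_add, derivative_sub, derivative_mul, derivative_X_pow, derivative_ofNat,
    derivative_one, derivative_zero, map_natCast, derivative_natCast]
  norm_num
  ring

lemma integral_mul_rodriguesDeriv_four_six :
    ∫ x in (-1 : ℝ)..1, (X ^ 2 * (1 - X ^ 2) ^ (1 + 1) * rodriguesDeriv 4 6).eval x = 4096 / 7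
    ∧ ∫ x in (-1 : ℝ)..1, (X ^ 1 * (1 - X ^ 2) ^ (2 + 1) * rodriguesDeriv 4 6).eval x = 0
    ∧ ∫ x in (-1 : ℝ)..1, (X ^ 0 * (1 - X ^ 2) ^ (3 + 1) * rodriguesDeriv 4 6).eval x
      = -(65536 / 77) := by
  simp only [rodriguesDeriv_four_six, eval_mul, eval_sub, eval_pow, eval_X, eval_one,
    eval_ofNat]
  ring_nf
  simp (disch := exact Continuous.intervalIntegrable (by fun_prop) _ _) only
    [intervalIntegral.integral_add, intervalIntegral.integral_sub,
    intervalIntegral.integral_mul_const, integral_pow]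
  norm_num

/-! ### Gevrey bounds -/

lemma coeff_fun_add {u v : SphereFun} (hu : Continuous (Function.uncurry u))
    (hv : Continuous (Function.uncurry v)) (n : ℕ) (m : ℤ) :
    coeff (fun θ φ => u θ φ + v θ φ) n m = coeff u n m + coeff v n m := by
  have hcont {f : SphereFun} (hf : Continuous (Function.uncurry f)) :
      Continuous fun x : ℝ × ℝ => f x.2 x.1 * Ynm n m x.2 x.1 * Real.sin x.2 :=
    ((hf.comp continuous_swap).mul ((continuous_Ynm n m).comp continuous_swap)).mul
      (Real.continuous_sin.comp continuous_snd)
  have inner_integrable {f : SphereFun} (hf : Continuous (Function.uncurry f)) (φ : ℝ) :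
      IntervalIntegrable (fun θ => f θ φ * Ynm n m θ φ * Real.sin θ) volume 0 Real.pi :=
    ((hcont hf).comp (Continuous.prodMk_right φ)).intervalIntegrable _ _
  have outer_integrable {f : SphereFun} (hf : Continuous (Function.uncurry f)) :
      IntervalIntegrable (fun φ => ∫ θ in (0 : ℝ)..Real.pi, f θ φ * Ynm n m θ φ * Real.sin θ)
        volume 0 (2 * Real.pi) :=
    (intervalIntegral.continuous_parametric_intervalIntegral_of_continuous' (hcont hf) _ _
      ).intervalIntegrable _ _
  unfold coeff sInner
  rw [← intervalIntegral.integral_add (outer_integrable hu) (outer_integrable hv)]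
  simp only [add_mul,
    intervalIntegral.integral_add (inner_integrable hu _) (inner_integrable hv _)]

lemma abs_coeff_le {u : SphereFun} {A B : ℝ} {n : ℕ} {m : ℤ} (hu : ∀ θ φ, |u θ φ| ≤ A)
    (hY : ∀ θ φ, |Ynm n m θ φ| ≤ B) : |coeff u n m| ≤ 20 * (A * B) := by
  have hA : 0 ≤ A := (abs_nonneg _).trans (hu 0 0)
  have hB : 0 ≤ B := (abs_nonneg _).trans (hY 0 0)
  have inner_le (φ : ℝ) : ‖∫ θ in (0 : ℝ)..Real.pi, u θ φ * Ynm n m θ φ * Real.sin θ‖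
      ≤ A * B * 1 * |Real.pi - 0| := by
    refine intervalIntegral.norm_integral_le_of_norm_le_const fun θ _ => ?_
    rw [norm_mul, norm_mul]
    gcongr
    exacts [hu θ φ, hY θ φ, Real.abs_sin_le_one θ]
  have area_le : Real.pi * (2 * Real.pi) ≤ 20 := by nlinarith [Real.pi_lt_d2, Real.pi_pos]
  calc |coeff u n m|
      ≤ A * B * 1 * |Real.pi - 0| * |2 * Real.pi - 0| :=
        intervalIntegral.norm_integral_le_of_norm_le_const fun φ _ => inner_le φ
    _ = A * B * (Real.pi * (2 * Real.pi)) := by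
        rw [sub_zero, sub_zero, abs_of_pos Real.pi_pos, abs_of_pos Real.two_pi_pos]
        ring
    _ ≤ 20 * (A * B) := by
        rw [mul_comm 20]
        gcongr

lemma continuous_oddSeries (u : EllOne OddPair) : Continuous (Function.uncurry (oddSeries u)) :=
  (sphSmooth_oddSeries u).continuous

lemma abs_oddSeries_le (u : EllOne OddPair) (θ φ : ℝ) : |oddSeries u θ φ| ≤ ‖u‖ := by
  simpa [oddSeries] using EllOne.norm_apply_le (f := evalSeries θ φ) (C := 1)
    (fun p => (evalSeries_basisVec θ φ p).symm ▸ abs_oddMonomial_le_one p θ φ) u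

lemma exists_clm_coeff_oddSeries {n : ℕ} {m : ℤ} (hm : m.natAbs ≤ n) :
    ∃ L : EllOne OddPair →L[ℝ] ℝ, ∀ u, L u = coeff (oddSeries u) n m := by
  refine ⟨LinearMap.mkContinuous
    { toFun := fun u => coeff (oddSeries u) n m
      map_add' := fun u v => ?_
      map_smul' := fun c u => ?_ } (20 * 16 ^ n) fun u => ?_, fun u => rfl⟩
  · rw [← coeff_fun_add (continuous_oddSeries u) (continuous_oddSeries v)]
    exact congrArg (coeff · n m) (funext₂ fun θ φ => map_add (evalSeries θ φ) u v)
  · rw [RingHom.id_apply, smul_eq_mul, ← coeff_const_mul]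
    exact congrArg (coeff · n m) (funext₂ fun θ φ => map_smul (evalSeries θ φ) c u)
  · exact (abs_coeff_le (abs_oddSeries_le u) (abs_Ynm_le hm)).trans_eq (by ring)

lemma oddSeries_basisVec (p : OddPair) : oddSeries (EllOne.basisVec p) = oddMonomial p :=
  funext₂ fun θ φ => evalSeries_basisVec θ φ p

lemma abs_coeff_oddSeries_le {n : ℕ} {m : ℤ} (hm : m.natAbs ≤ n) (u : EllOne OddPair) :
    |coeff (oddSeries u) n m| ≤ 20 * (16 * ρ) ^ n * ‖u‖ := by
  have hρ := monomialScale_pos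
  obtain ⟨L, hL⟩ := exists_clm_coeff_oddSeries hm
  rw [← hL]
  refine EllOne.norm_apply_le (f := L) (fun p => ?_) u
  rw [hL, oddSeries_basisVec, Real.norm_eq_abs]
  rcases lt_or_ge p.degree n with hp | hp
  · rw [coeff_oddMonomial_eq_zero hp, abs_zero]
    positivity
  · calc |coeff (oddMonomial p) n m|
        ≤ 20 * (ρ ^ p.degree * 16 ^ n) := abs_coeff_le (abs_oddMonomial_le p) (abs_Ynm_le hm)
      _ ≤ 20 * (ρ ^ n * 16 ^ n) := by
          gcongr ?_ * (?_ * _)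
          exact pow_le_pow_of_le_one hρ.le monomialScale_lt_one.le hp
      _ = 20 * (16 * ρ) ^ n := by rw [mul_pow, mul_comm (ρ ^ n)]

lemma muSp_nonneg (n : ℕ) : 0 ≤ muSp n := by
  unfold muSp
  positivity

lemma muSp_le_sq (n : ℕ) : muSp n ≤ ((n : ℝ) + 1) ^ 2 := by
  unfold muSp
  linarith [n.cast_nonneg (α := ℝ)]

lemma muSp_sq_le (n : ℕ) : muSp n ^ 2 ≤ 16 ^ n := by
  have hle : muSp n ≤ (2 ^ n) ^ 2 :=
    (muSp_le_sq n).trans (by gcongr; exact mod_cast n.lt_two_pow_self)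
  calc muSp n ^ 2 ≤ ((2 ^ n) ^ 2) ^ 2 := pow_le_pow_left₀ (muSp_nonneg n) hle 2
    _ = 16 ^ n := by
        rw [← pow_mul, ← pow_mul, mul_comm n, pow_mul]
        norm_num

lemma exp_sqrt_muSp_le (n : ℕ) : Real.exp (Real.sqrt (muSp n)) ≤ 3 * 3 ^ n := by
  calc Real.exp (Real.sqrt (muSp n)) ≤ Real.exp ((n + 1 : ℕ) * 1) := by
        rw [mul_one, Nat.cast_succ]
        exact Real.exp_le_exp.mpr (Real.sqrt_le_iff.mpr ⟨by positivity, muSp_le_sq n⟩)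
    _ = Real.exp 1 ^ (n + 1) := Real.exp_nat_mul _ _
    _ ≤ 3 ^ (n + 1) := by gcongr; exact Real.exp_one_lt_three.le
    _ = 3 * 3 ^ n := pow_succ' ..

lemma gevrey_term_oddSeries_le {n : ℕ} {m : ℤ} (hm : m.natAbs ≤ n) (u : EllOne OddPair) :
    muSp n ^ 2 * Real.exp (2 * (1 / 2) * Real.sqrt (muSp n)) * coeff (oddSeries u) n m ^ 2
      ≤ 1200 * ‖u‖ ^ 2 * ((1 / 4) ^ n * (1 / 4) ^ m.natAbs) := by
  have hcoeff : coeff (oddSeries u) n m ^ 2 ≤ (20 * (16 * ρ) ^ n * ‖u‖) ^ 2 := by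
    rw [← sq_abs]
    exact pow_le_pow_left₀ (abs_nonneg _) (abs_coeff_oddSeries_le hm u) 2
  have hratio : 16 * 3 * (16 * ρ) ^ 2 ≤ 1 / 4 * (1 / 4) := by norm_num [monomialScale]
  rw [mul_one_div_cancel two_ne_zero, one_mul]
  calc muSp n ^ 2 * Real.exp (Real.sqrt (muSp n)) * coeff (oddSeries u) n m ^ 2
      ≤ 16 ^ n * (3 * 3 ^ n) * (20 * (16 * ρ) ^ n * ‖u‖) ^ 2 := by
        gcongr
        exacts [muSp_sq_le n, exp_sqrt_muSp_le n]
    _ = 1200 * ‖u‖ ^ 2 * (16 * 3 * (16 * ρ) ^ 2) ^ n := by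
        rw [mul_pow (16 * 3), mul_pow 16 3, pow_right_comm (16 * ρ)]
        ring
    _ ≤ 1200 * ‖u‖ ^ 2 * (1 / 4 * (1 / 4)) ^ n := by
        have := monomialScale_pos
        gcongr
    _ = 1200 * ‖u‖ ^ 2 * ((1 / 4) ^ n * (1 / 4) ^ n) := by rw [mul_pow (1 / 4)]
    _ ≤ 1200 * ‖u‖ ^ 2 * ((1 / 4) ^ n * (1 / 4) ^ m.natAbs) := by
        gcongr _ * (_ * ?_)
        exact pow_le_pow_of_le_one (by norm_num) (by norm_num) hm

lemma summable_pow_mul_pow_natAbs {r : ℝ} (hr : 0 ≤ r) (hr' : r < 1) :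
    Summable fun p : ℕ × ℤ => r ^ p.1 * r ^ p.2.natAbs := by
  have hnat : Summable fun n : ℕ => r ^ n := summable_geometric_of_lt_one hr hr'
  have h_int : Summable fun m : ℤ => r ^ m.natAbs := by
    refine .of_nat_of_neg ?_ ?_ <;> simpa using hnat
  exact hnat.mul_of_nonneg h_int (fun _ => by positivity) fun _ => by positivity

lemma exists_gevNormSq_oddSeries_le :
    ∃ K > 0, ∀ u, gevNormSq (1 / 2) (oddSeries u) ≤ ENNReal.ofReal ((K * ‖u‖) ^ 2) := by
  have hsummable := summable_pow_mul_pow_natAbs (r := 1 / 4) (by norm_num) (by norm_num)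
  set S : ℝ := ∑' p : ℕ × ℤ, (1 / 4) ^ p.1 * (1 / 4) ^ p.2.natAbs
  have hS : 0 < S := hsummable.tsum_pos (fun _ => by positivity) (0, 0) (by norm_num)
  refine ⟨Real.sqrt (1200 * S), by positivity, fun u => ?_⟩
  calc gevNormSq (1 / 2) (oddSeries u)
      ≤ ∑' p : ℕ × ℤ, ENNReal.ofReal
          (1200 * ‖u‖ ^ 2 * ((1 / 4) ^ p.1 * (1 / 4) ^ p.2.natAbs)) := by
        refine ENNReal.tsum_le_tsum fun p => ?_
        split_ifs with hp
        · rw [Int.abs_eq_natAbs, Nat.cast_le] at hp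
          exact ENNReal.ofReal_le_ofReal (gevrey_term_oddSeries_le hp.2 u)
        · exact zero_le
    _ = ENNReal.ofReal (1200 * ‖u‖ ^ 2 * S) := by
        rw [← ENNReal.ofReal_tsum_of_nonneg (fun _ => by positivity) (hsummable.mul_left _),
          tsum_mul_left]
    _ = ENNReal.ofReal ((Real.sqrt (1200 * S) * ‖u‖) ^ 2) := by
        rw [mul_pow, Real.sq_sqrt (by positivity), mul_right_comm]

/-! ### The coefficient along `Y₄²` -/

lemma azimuthal_two (φ : ℝ) : azimuthal 2 φ = Real.cos (2 * φ) := by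
  simp [azimuthal]

lemma coeff_oddMonomial_four_two {a b : ℕ} (h : Odd (a + b)) :
    coeff (oddMonomial ⟨(a, b), h⟩) 4 2 = ρ ^ (a + 2 * b) * (harmonicConst 4 2
      * (∫ x in (-1 : ℝ)..1, (X ^ a * (1 - X ^ 2) ^ (b + 1) * rodriguesDeriv 4 6).eval x)
      * ∫ φ in (0 : ℝ)..(2 * Real.pi), Real.cos (2 * φ) ^ (b + 1)) := by
  have h_angular := coeff_cos_pow_mul_pow a b 4 (m := 2) (j := 1) rfl
  simp only [azimuthal_two, ← pow_succ] at h_angular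
  rw [← h_angular, ← coeff_const_mul]
  rfl

lemma coeff_parametrix_firstCorrection (ε : ℝ) :
    coeff (oddSeries (parametrix (firstCorrection ε))) 4 2
      = -(harmonicConst 4 2 * Real.pi * ρ ^ 4 *
        (correctionCoeff₂₁ ε / 14 * (4096 / 7)
          - ρ ^ 2 * (ε ^ 3 / 36) * (65536 / 77 * (3 / 4)))) := by
  obtain ⟨L, hL⟩ := exists_clm_coeff_oddSeries (n := 4) (m := 2) (by decide)
  have hLmon {a b : ℕ} (h : Odd (a + b)) :
      L (monomialVec a b) = coeff (oddMonomial ⟨(a, b), h⟩) 4 2 := by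
    rw [hL, monomialVec_of_odd h, oddSeries_basisVec]
  have hLlow {a b : ℕ} (h : Odd (a + b)) (hdeg : a + 2 * b < 4) : L (monomialVec a b) = 0 :=
    (hLmon h).trans (coeff_oddMonomial_eq_zero hdeg 2)
  obtain ⟨h_int₂₁, h_int₁₂, h_int₀₃⟩ := integral_mul_rodriguesDeriv_four_six
  have cos_sq : ∫ φ in (0 : ℝ)..(2 * Real.pi), Real.cos (2 * φ) ^ (1 + 1) = Real.pi := by
    rw [integral_cos_two_mul_pow_add_two 0]
    simp
  have cos_fourth :
      ∫ φ in (0 : ℝ)..(2 * Real.pi), Real.cos (2 * φ) ^ (3 + 1) = 3 / 4 * Real.pi := by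
    rw [integral_cos_two_mul_pow_add_two 2, cos_sq]
    norm_num
  rw [← hL]
  simp only [firstCorrection, map_add, map_smul, smul_eq_mul,
    parametrix_monomialVec (show Odd (0 + 3) by decide),
    parametrix_monomialVec (show Odd (1 + 2) by decide),
    parametrix_monomialVec (show Odd (2 + 1) by decide),
    parametrix_monomialVec (show Odd (3 + 0) by decide),
    parametrix_monomialVec (show Odd (0 + 1) by decide),
    parametrix_monomialVec (show Odd (1 + 0) by decide),
    hLlow (show Odd (3 + 0) by decide) (by decide),
    hLlow (show Odd (0 + 1) by decide) (by decide),
    hLlow (show Odd (1 + 0) by decide) (by decide),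
    hLmon (show Odd (0 + 3) by decide), hLmon (show Odd (1 + 2) by decide),
    hLmon (show Odd (2 + 1) by decide), coeff_oddMonomial_four_two, h_int₂₁, h_int₁₂, h_int₀₃,
    cos_sq, cos_fourth, parametrixCoeff, OddPair.degree]
  norm_num
  ring

lemma coeff_parametrix_firstCorrection_ne_zero {ε : ℝ} (hε : 0 < ε) (hε_le : ε ≤ 1) :
    coeff (oddSeries (parametrix (firstCorrection ε))) 4 2 ≠ 0 := by
  have hK := harmonicConst_pos 4 2
  have hρ := monomialScale_pos
  have cube_le : ε ^ 3 ≤ ε := pow_le_of_le_one hε.le hε_le (by norm_num)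
  rw [coeff_parametrix_firstCorrection]
  refine neg_ne_zero.mpr (mul_ne_zero (by positivity) (ne_of_gt ?_))
  unfold correctionCoeff₂₁ monomialScale
  linarith

/-! ### Non-triviality -/

lemma coeff_congr {u v : SphereFun} (h : ∀ θ ∈ Set.Icc 0 Real.pi, ∀ φ, u θ φ = v θ φ) (n : ℕ)
    (m : ℤ) : coeff u n m = coeff v n m := by
  refine intervalIntegral.integral_congr fun φ _ => intervalIntegral.integral_congr fun θ hθ => ?_
  rw [Set.uIcc_of_le Real.pi_pos.le] at hθ
  simp only [h θ hθ φ]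

lemma coeff_fun_sum {ι : Type*} (s : Finset ι) {f : ι → SphereFun}
    (hf : ∀ i, Continuous (Function.uncurry (f i))) (n : ℕ) (m : ℤ) :
    coeff (fun θ φ => ∑ i ∈ s, f i θ φ) n m = ∑ i ∈ s, coeff (f i) n m := by
  classical
  induction s using Finset.induction_on with
  | empty => simp [coeff, sInner]
  | insert i s hi ih =>
    simp only [Finset.sum_insert hi]
    have h_sum : Continuous (Function.uncurry fun θ φ => ∑ i ∈ s, f i θ φ) :=
      continuous_finsetSum s fun i _ => hf i
    rw [coeff_fun_add (hf i) h_sum, ih]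

lemma coeff_zonal_eq_zero (A : ℝ → ℝ) (n : ℕ) {m : ℤ} (hm : m ≠ 0) :
    coeff (fun θ _ => A θ) n m = 0 := by
  have h_zero : ∫ φ in (0 : ℝ)..(2 * Real.pi), 1 * azimuthal m φ = 0 := by
    simpa [azimuthal] using integral_azimuthal_mul_azimuthal hm.symm
  simpa only [mul_one, h_zero, mul_zero] using coeff_separated A (fun _ => 1) n m

lemma sphNontrivial_of_coeff_ne_zero {u : SphereFun} (hu : Continuous (Function.uncurry u))
    {n : ℕ} (hn : 2 < n) {m : ℤ} (hm : m ≠ 0) (h : coeff u n m ≠ 0) : SphNontrivial u := by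
  rintro ⟨z, c, hz, hu_eq⟩
  have hcont (k : ℤ) : Continuous (Function.uncurry fun θ φ => c k * Ynm 2 k θ φ) :=
    continuous_const.mul (continuous_Ynm 2 k)
  set S : SphereFun := fun θ φ => ∑ k ∈ Finset.Icc (-2 : ℤ) 2, c k * Ynm 2 k θ φ with hS_def
  have hS_cont : Continuous (Function.uncurry S) := continuous_finsetSum _ fun k _ => hcont k
  have hS : coeff S n m = 0 := by
    rw [hS_def, coeff_fun_sum _ hcont]
    refine Finset.sum_eq_zero fun k hk => ?_
    have hk_le : k.natAbs ≤ 2 := by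
      rw [Finset.mem_Icc] at hk
      omega
    rw [coeff_const_mul, coeff_Ynm_eq_zero hn hk_le, mul_zero]
  have hz_cont : Continuous (Function.uncurry fun θ _ : ℝ => u θ 0 - S θ 0) :=
    (hu.sub hS_cont).comp (continuous_fst.prodMk continuous_const)
  have hu_split : ∀ θ ∈ Set.Icc 0 Real.pi, ∀ φ, u θ φ = u θ 0 - S θ 0 + S θ φ := by
    intro θ hθ φ
    rw [hu_eq θ hθ φ, hu_eq θ hθ 0, hz θ φ 0]
    ring
  apply h
  rw [coeff_congr hu_split, coeff_fun_add hz_cont hS_cont, hS, coeff_zonal_eq_zero _ _ hm,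
    add_zero]

lemma SphNontrivial.not_zonalOn {u : SphereFun} (h : SphNontrivial u) : ¬ ZonalOn u := fun hu =>
  h ⟨fun θ _ => u θ 0, 0, fun _ _ _ => rfl, fun θ hθ φ => by simp [hu θ hθ φ 0]⟩

/-! ### The travelling wave -/

/-- The amplitude of the profile in the travelling wave of speed `a`, chosen so that the
terms of the Laplacian in `cos θ` cancel. -/
def waveAmplitude (a ε δ : ℝ) (h : EllOne OddPair) : ℝ := 2 * a / (driftCoeff ε δ h * ρ)

/-- The series of the travelling wave of speed `a`, the rescaled profile in the rotating frame. -/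
def waveSeries (a ε δ : ℝ) (h : EllOne OddPair) : EllOne OddPair :=
  (a / ρ) • monomialVec 1 0 + waveAmplitude a ε δ h • profile ε δ h

lemma oddSeries_smul_monomialVec_one_zero (c θ φ : ℝ) :
    oddSeries ((c / ρ) • monomialVec 1 0) θ φ = c * Real.cos θ := by
  rw [oddSeries, map_smul, evalSeries_monomialVec (by decide)]
  simp only [mul_zero, add_zero, pow_one, pow_zero, mul_one, smul_eq_mul]
  rw [← mul_assoc, div_mul_cancel₀ _ monomialScale_pos.ne']

lemma periodicPhi_oddSeries (u : EllOne OddPair) : PeriodicPhi (oddSeries u) := by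
  intro θ φ
  have hcos : Real.cos (2 * (φ + 2 * Real.pi)) = Real.cos (2 * φ) := by
    simpa [mul_add] using Real.cos_add_nat_mul_two_pi (2 * φ) 2
  simp only [oddSeries_eq_tsum, oddMonomial, hcos]

lemma exists_lapS_waveSeries_eq_comp {a ε δ : ℝ} (hε : ε ≠ 0) {h : EllOne OddPair}
    (h_eq : profileResidual ε (δ, h) = 0) (hc : driftCoeff ε δ h ≠ 0) :
    ∃ F : ℝ → ℝ, Differentiable ℝ F ∧ ∀ θ ∈ Set.Ioo 0 Real.pi, ∀ φ,
      lapS (oddSeries (waveSeries a ε δ h)) θ φ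
        = F (oddSeries (waveSeries a ε δ h) θ φ - a * Real.cos θ) := by
  have hρ := monomialScale_pos.ne'
  set σ := waveAmplitude a ε δ h with hσ_def
  have hσc : σ * (driftCoeff ε δ h * ρ) = 2 * a := div_mul_cancel₀ _ (mul_ne_zero hc hρ)
  refine ⟨fun s => -(6 + δ * (EllOne.coord .w h / ε)) * s + δ / σ ^ 2 * s ^ 3, by fun_prop,
    fun θ hθ φ => ?_⟩
  have hsin : Real.sin θ ≠ 0 := (Real.sin_pos_of_mem_Ioo hθ).ne'
  obtain ⟨L, hL⟩ := exists_clm_lapS_oddSeries θ φ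
  have hLz : L (monomialVec 1 0) = -2 * (ρ * Real.cos θ) := by
    rw [hL, monomialVec_of_odd (by decide), lapS_oddSeries_basisVec _ hsin]
    norm_num [OddPair.degree, lapRemainder, oddMonomial]
  have hΦ : oddSeries (waveSeries a ε δ h) θ φ - a * Real.cos θ
      = σ * oddSeries (profile ε δ h) θ φ := by
    rw [← oddSeries_smul_monomialVec_one_zero a θ φ]
    simp only [waveSeries, oddSeries, map_add, map_smul, smul_eq_mul, add_sub_cancel_left, hσ_def]
  have hlap : lapS (oddSeries (waveSeries a ε δ h)) θ φ
      = a / ρ * (-2 * (ρ * Real.cos θ)) + σ * lapS (oddSeries (profile ε δ h)) θ φ := by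
    simp only [← hL, waveSeries, map_add, map_smul, smul_eq_mul, hLz, hσ_def]
  rw [hΦ, hlap, lapS_profile hε h_eq hsin]
  field_simp
  linear_combination ε * Real.cos θ * hσc

lemma coeff_waveSeries (a ε δ : ℝ) (h : EllOne OddPair) :
    coeff (oddSeries (waveSeries a ε δ h)) 4 2
      = waveAmplitude a ε δ h * (δ * coeff (oddSeries (parametrix h)) 4 2) := by
  obtain ⟨L, hL⟩ := exists_clm_coeff_oddSeries (n := 4) (m := 2) (by decide)
  have hz : L (monomialVec 1 0) = 0 := by
    rw [hL, monomialVec_of_odd (by decide), oddSeries_basisVec]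
    exact coeff_oddMonomial_eq_zero (by decide) 2
  have hw : L (monomialVec 0 1) = 0 := by
    rw [hL, monomialVec_of_odd (by decide), oddSeries_basisVec]
    exact coeff_oddMonomial_eq_zero (by decide) 2
  rw [← hL, ← hL]
  simp only [waveSeries, profile, leadingProfile, map_add, map_smul, smul_eq_mul, hz, hw, mul_zero,
    zero_add]

lemma tendsto_driftCoeff {ε : ℝ} {H : ℝ → EllOne OddPair} {h₀ : EllOne OddPair}
    (hH : Tendsto H (𝓝 0) (𝓝 h₀)) : Tendsto (fun δ => driftCoeff ε δ (H δ)) (𝓝 0) (𝓝 4) := by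
  have hδ : Tendsto (fun δ : ℝ => δ) (𝓝 0) (𝓝 0) := tendsto_id
  have h_coord (p : OddPair) : Tendsto (fun δ => EllOne.coord p (H δ)) (𝓝 0)
      (𝓝 (EllOne.coord p h₀)) := ((EllOne.coord p).continuous.tendsto h₀).comp hH
  simpa [driftCoeff] using
    ((hδ.mul (h_coord .z)).const_sub 4).add (hδ.mul ((h_coord .w).div_const ε))

lemma tendsto_waveSeries (a : ℝ) {ε : ℝ} {H : ℝ → EllOne OddPair} {h₀ : EllOne OddPair}
    (hH : Tendsto H (𝓝 0) (𝓝 h₀)) :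
    Tendsto (fun δ => waveSeries a ε δ (H δ)) (𝓝 0)
      (𝓝 ((3 / 2 * a / ρ) • monomialVec 1 0 + (a / (2 * ρ) * ε) • monomialVec 0 1)) := by
  have hρ := monomialScale_pos.ne'
  have h_amplitude : Tendsto (fun δ => waveAmplitude a ε δ (H δ)) (𝓝 0)
      (𝓝 (2 * a / (4 * ρ))) :=
    tendsto_const_nhds.div ((tendsto_driftCoeff hH).mul_const ρ) (by positivity)
  have h_profile : Tendsto (fun δ => profile ε δ (H δ)) (𝓝 0)
      (𝓝 (leadingProfile ε + (0 : ℝ) • parametrix h₀)) :=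
    (tendsto_id.smul ((parametrix.continuous.tendsto h₀).comp hH)).const_add _
  have h_limit : (3 / 2 * a / ρ) • monomialVec 1 0 + (a / (2 * ρ) * ε) • monomialVec 0 1
      = (a / ρ) • monomialVec 1 0
        + (2 * a / (4 * ρ)) • (leadingProfile ε + (0 : ℝ) • parametrix h₀) := by
    rw [leadingProfile]
    match_scalars <;> field_simp <;> ring
  rw [h_limit]
  exact (h_amplitude.smul h_profile).const_add _

lemma exists_waveSeries {a ε : ℝ} (ha : a ≠ 0) (hε : 0 < ε) (hε_le : ε ≤ 1) :
    ∃ δ h, profileResidual ε (δ, h) = 0 ∧ driftCoeff ε δ h ≠ 0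
      ∧ ‖(3 / 2 * a / ρ) • monomialVec 1 0 - waveSeries a ε δ h‖ < (|a / (2 * ρ)| + 1) * ε
      ∧ coeff (oddSeries (waveSeries a ε δ h)) 4 2 ≠ 0 := by
  obtain ⟨H, hH, h_solves⟩ :=
    exists_tendsto_profileResidual_eq_zero ε (profileResidual_zero_firstCorrection ε)
  have h_drift : ∀ᶠ δ in 𝓝 0, driftCoeff ε δ (H δ) ≠ 0 :=
    (tendsto_driftCoeff hH).eventually_ne four_ne_zero
  have h_close : ∀ᶠ δ in 𝓝 0, ‖(3 / 2 * a / ρ) • monomialVec 1 0 - waveSeries a ε δ (H δ)‖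
      < (|a / (2 * ρ)| + 1) * ε := by
    refine ((tendsto_waveSeries a hH).const_sub _).norm.eventually_lt_const ?_
    rw [sub_add_cancel_left, norm_neg, norm_smul, norm_mul, Real.norm_of_nonneg hε.le,
      Real.norm_eq_abs]
    nlinarith [norm_monomialVec_le 0 1, mul_nonneg (abs_nonneg (a / (2 * ρ))) hε.le]
  have h_coeff : ∀ᶠ δ in 𝓝 0, coeff (oddSeries (parametrix (H δ))) 4 2 ≠ 0 := by
    obtain ⟨L, hL⟩ := exists_clm_coeff_oddSeries (n := 4) (m := 2) (by decide)
    simp only [← hL]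
    refine (((L ∘L parametrix).continuous.tendsto _).comp hH).eventually_ne ?_
    simpa only [ContinuousLinearMap.comp_apply, hL] using
      coeff_parametrix_firstCorrection_ne_zero hε hε_le
  obtain ⟨δ, ⟨hsol, hδ_drift, hδ_close, hδ_coeff⟩, hδ⟩ :=
    ((h_solves.and (h_drift.and (h_close.and h_coeff))).filter_mono nhdsWithin_le_nhds).and
      (self_mem_nhdsWithin (s := {0}ᶜ)) |>.exists
  refine ⟨δ, H δ, hsol, hδ_drift, hδ_close, ?_⟩
  rw [coeff_waveSeries]
  have h_amplitude : waveAmplitude a ε δ (H δ) ≠ 0 :=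
    div_ne_zero (mul_ne_zero two_ne_zero ha) (mul_ne_zero hδ_drift monomialScale_pos.ne')
  exact mul_ne_zero h_amplitude (mul_ne_zero hδ hδ_coeff)

lemma three_mul_Ynm_one_zero (γ θ φ : ℝ) :
    3 * γ * Ynm 1 0 θ φ = 3 / 2 * (Real.sqrt (3 / Real.pi) * γ) * Real.cos θ := by
  have h_legendre : legP 1 (Real.cos θ) = Real.cos θ := by
    simp [legP, iteratedDeriv_one]
  have h_const : Real.sqrt ((2 * (1 : ℕ) + 1) / (4 * Real.pi)) = Real.sqrt (3 / Real.pi) / 2 := by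
    rw [Real.sqrt_eq_iff_mul_self_eq (by positivity) (by positivity), div_mul_div_comm,
      Real.mul_self_sqrt (by positivity)]
    field_simp
    norm_num
  rw [Ynm, if_pos rfl, h_legendre, h_const]
  ring

end

/-- For `γ ≠ 0` and `γ̃ = √(3/π)γ` there exist real-analytic
non-zonal, non-trivial travelling wave solutions (with wave speed `γ̃`) of the
Euler equations on the non-rotating sphere, arbitrarily close in Gevrey norm to
`3γY₁⁰`.  The travelling wave `Ψ̄(t,θ,φ) = Φ(θ, φ−γ̃t)` is encoded by its
profile `Φ` via the profile equation `−γ̃ ∂_φΩ + ∇⊥Φ·∇Ω = 0`, `Ω = ΔΦ`. -/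
theorem nonzonal_travelling_waves_nonrotating (γ γt : ℝ) (hγ : γ ≠ 0)
    (hγt : γt = Real.sqrt (3/Real.pi) * γ) :
    ∃ (lam M ε₀ : ℝ), 0 < lam ∧ 0 < M ∧ 0 < ε₀ ∧
      ∀ ε : ℝ, 0 < ε → ε ≤ ε₀ →
        ∃ Φ : SphereFun,
          SphSmooth Φ ∧ PeriodicPhi Φ ∧ RealAnalyticSphere Φ ∧
          -- Ψ̄(t,θ,φ) := Φ(θ, φ − γ̃t) is a travelling wave solution of
          -- ∂_tΩ̄ + ∇⊥Ψ̄·∇Ω̄ = 0, Ω̄ = ΔΨ̄, which for the profile reads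
          -- −γ̃ ∂_φ(ΔΦ) + ∇⊥Φ·∇(ΔΦ) = 0
          (∀ θ ∈ Set.Ioo (0:ℝ) Real.pi, ∀ φ : ℝ,
            -γt * dPhi (lapS Φ) θ φ + advect Φ (lapS Φ) θ φ = 0) ∧
          gevNormSq lam (fun θ φ => 3*γ*Ynm 1 0 θ φ - Φ θ φ)
            ≤ ENNReal.ofReal ((M*ε)^2) ∧
          coeff Φ 4 2 ≠ 0 ∧
          ¬ ZonalOn Φ ∧ SphNontrivial Φ := by
  obtain ⟨K, hK, gevrey_le⟩ := exists_gevNormSq_oddSeries_le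
  have ha : γt ≠ 0 := by
    rw [hγt]
    exact mul_ne_zero (by positivity) hγ
  refine ⟨1 / 2, K * (|γt / (2 * monomialScale)| + 1), 1, by norm_num, by positivity, one_pos,
    fun ε hε hε_le => ?_⟩
  obtain ⟨δ, h, h_eq, h_drift, h_close, h_coeff⟩ := exists_waveSeries ha hε hε_le
  obtain ⟨F, hF, hlap⟩ := exists_lapS_waveSeries_eq_comp hε.ne' h_eq h_drift
  have h_nontrivial : SphNontrivial (oddSeries (waveSeries γt ε δ h)) :=
    sphNontrivial_of_coeff_ne_zero (continuous_oddSeries _) (by norm_num) two_ne_zero h_coeff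
  have h_diff : (fun θ φ => 3 * γ * Ynm 1 0 θ φ - oddSeries (waveSeries γt ε δ h) θ φ)
      = oddSeries ((3 / 2 * γt / monomialScale) • monomialVec 1 0 - waveSeries γt ε δ h) := by
    ext θ φ
    rw [three_mul_Ynm_one_zero, ← hγt, ← oddSeries_smul_monomialVec_one_zero _ θ φ]
    exact (map_sub (evalSeries θ φ) _ _).symm
  refine ⟨oddSeries (waveSeries γt ε δ h), sphSmooth_oddSeries _, periodicPhi_oddSeries _,
    ⟨1 / 2, by norm_num, (gevrey_le _).trans_lt ENNReal.ofReal_lt_top⟩,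
    fun θ hθ φ => travellingWave_of_lapS_eq_comp (sphSmooth_oddSeries _) hF hlap hθ φ,
    ?_, h_coeff, h_nontrivial.not_zonalOn, h_nontrivial⟩
  rw [h_diff, mul_assoc]
  exact (gevrey_le _).trans (by gcongr)
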